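/- arXiv:1703.02586 — 2 statements merged into one kernel-verified Lean document; each statement's English description precedes it below -/
import Mathlib

section
/- Let n ≥ 1 and d ≥ 2 be integers. The reduced simplicial homology of the (d−2)-independence complex of the path on n vertices with rational coefficients is that of a sphere or a point: H̃_j(Ind_{d−2}(A_n); ℚ) ≅ ℚ if there exists an integer k ≥ 1 with (n = dk or n = dk − 1) and j = k(d − 2) − 1, and H̃_j(Ind_{d−2}(A_n); ℚ) = 0 in all other cases (in particular, all reduced homology vanishes when n ≡ r mod d with 1 ≤ r ≤ d − 2). -/
noncomputable section

/-- Every maximal run of consecutive integers in `σ` has size at most `r`. -/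
def RunsLE (r : ℕ) (σ : Finset ℕ) : Prop :=
  ∀ a : ℕ, ¬ Finset.Icc a (a + r) ⊆ σ

section QuotientHelpers

variable {S M : Type} [CommRing S] [AddCommGroup M] [Module S M]

/-- The kernel of an endomorphism (instance-explicit helper). -/
def kerOf (f : M →ₗ[S] M) : Submodule S M := LinearMap.ker f

/-- The image of a submodule under an endomorphism (instance-explicit helper). -/
def mapOf (f : M →ₗ[S] M) (P : Submodule S M) : Submodule S M := P.map f

/-- `Q`, viewed inside the submodule `P` (instance-explicit helper). -/
def inSub (P Q : Submodule S M) : Submodule S ↥P := Q.comap P.subtype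

/-- The quotient of a module by a submodule (instance-explicit helper). -/
def modQuot (N : Submodule S M) : Type := M ⧸ N

noncomputable instance (N : Submodule S M) : AddCommGroup (modQuot N) :=
  inferInstanceAs (AddCommGroup (M ⧸ N))

noncomputable instance (N : Submodule S M) : Module S (modQuot N) :=
  inferInstanceAs (Module S (M ⧸ N))

/-- The subquotient `(P ∩ ker f) / (f(P') ∩ _)` used to define homology:
cycles in `P` modulo boundaries coming from `P'`. -/
def homologyOf (f : M →ₗ[S] M) (P P' : Submodule S M) : Type :=
  modQuot (inSub (kerOf f ⊓ P) (mapOf f P'))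

noncomputable instance (f : M →ₗ[S] M) (P P' : Submodule S M) :
    AddCommGroup (homologyOf f P P') :=
  inferInstanceAs (AddCommGroup (modQuot _))

noncomputable instance (f : M →ₗ[S] M) (P P' : Submodule S M) :
    Module S (homologyOf f P P') :=
  inferInstanceAs (Module S (modQuot _))

end QuotientHelpers

variable (S : Type) [CommRing S] (A : Type) [CommRing A] [Algebra S A]

/-- The boundary of a single face `σ = {v_0 < ⋯ < v_k}` in the augmented
simplicial chain complex: `∑ (-1)^i (σ \ {v_i})`, as a linear map on the
coefficients. -/
def sBnd (σ : Finset ℕ) : A →ₗ[S] ((Finset ℕ) →₀ A) :=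
  ∑ v ∈ σ, ((-1 : ℤ) ^ ((σ.filter (· < v)).card)) •
    (Finsupp.lsingle (σ.erase v) : A →ₗ[S] ((Finset ℕ) →₀ A))

/-- The boundary operator of the augmented simplicial chain complex with
coefficients in `A`, on the free `A`-module on all finite subsets of `ℕ`. -/
def sD : ((Finset ℕ) →₀ A) →ₗ[S] ((Finset ℕ) →₀ A) :=
  Finsupp.lsum ℕ (sBnd S A)

/-- The chains of degree `j` of the complex with faces `F` (the face `∅` has
degree `-1`): the chains supported on the faces of `F` with `j + 1` elements. -/
def sDeg (F : Set (Finset ℕ)) (j : ℤ) : Submodule S ((Finset ℕ) →₀ A) :=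
  Finsupp.supported A S {σ | σ ∈ F ∧ (σ.card : ℤ) = j + 1}

/-- The reduced simplicial homology `H̃_j` of the simplicial complex with set
of faces `F` (augmented by the empty face), with coefficients in `A`:
cycles of degree `j` modulo boundaries of chains of degree `j + 1`. -/
def SH (F : Set (Finset ℕ)) (j : ℤ) : Type :=
  homologyOf (sD S A) (sDeg S A F j) (sDeg S A F (j + 1))

noncomputable instance (F : Set (Finset ℕ)) (j : ℤ) : AddCommGroup (SH S A F j) :=
  inferInstanceAs (AddCommGroup (homologyOf _ _ _))

noncomputable instance (F : Set (Finset ℕ)) (j : ℤ) : Module S (SH S A F j) :=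
  inferInstanceAs (Module S (homologyOf _ _ _))

end

/-- The faces of the independence complex `Ind_r(A_n)` (together with the
empty face): the subsets of `{1, …, n}` all of whose maximal runs of
consecutive integers have size at most `r`. -/
def IndFaces (r n : ℕ) : Set (Finset ℕ) :=
  {σ | ↑σ ⊆ Finset.Icc 1 n ∧ RunsLE r σ}

/-!
Let `X = Ind_r(A_n)` with `n = m + r + 1`, and let `B = {m + 1, …, m + r}` be the block just before
the last vertex. A face of `X` can be enlarged by the vertex `n` unless it contains `B`, so the
faces not containing `B` form a cone. Hence the homology of `X` is that of the quotient by this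
cone, whose cells are the faces `τ ∪ B` with `τ` in the link of `B`; the link is
`Ind_r(A_{m - 1})`, because `m` and `n` cannot be joined to `B`. Each removal of `r + 2` vertices
thus shifts homology by `r` degrees, until one reaches the complex `{∅}` (with homology in degree
`-1` only) or a nonempty simplex.
-/

section HomologyOf

variable {S M N : Type} [CommRing S] [AddCommGroup M] [Module S M] [AddCommGroup N] [Module S N]

theorem subsingleton_homologyOf_iff {f : M →ₗ[S] M} {P P' : Submodule S M} :
    Subsingleton (homologyOf f P P') ↔ LinearMap.ker f ⊓ P ≤ P'.map f :=
  Submodule.Quotient.subsingleton_iff.trans Submodule.comap_subtype_eq_top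

/-- The map sending a cycle to its homology class. -/
def homologyClass (f : M →ₗ[S] M) (P P' : Submodule S M) :
    ↥(kerOf f ⊓ P) →ₗ[S] homologyOf f P P' :=
  (inSub (kerOf f ⊓ P) (mapOf f P')).mkQ

theorem homologyClass_surjective (f : M →ₗ[S] M) (P P' : Submodule S M) :
    Function.Surjective (homologyClass f P P') :=
  Submodule.mkQ_surjective _

theorem homologyClass_eq_zero_iff {f : M →ₗ[S] M} {P P' : Submodule S M} {z : ↥(kerOf f ⊓ P)} :
    homologyClass f P P' z = 0 ↔ (z : M) ∈ P'.map f :=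
  Submodule.Quotient.mk_eq_zero _

theorem homologyOf_equiv_of_surjective {f : M →ₗ[S] M} {P P' : Submodule S M}
    (ψ : ↥(kerOf f ⊓ P) →ₗ[S] N) (hsurj : Function.Surjective ψ)
    (hker : ∀ z, ψ z = 0 ↔ (z : M) ∈ P'.map f) : Nonempty (homologyOf f P P' ≃ₗ[S] N) := by
  have h : inSub (kerOf f ⊓ P) (mapOf f P') = LinearMap.ker ψ :=
    Submodule.ext fun z => (hker z).symm
  exact ⟨(Submodule.quotEquivOfEq _ _ h).trans (ψ.quotKerEquivOfSurjective hsurj)⟩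

theorem homologyOf_equiv_of_acyclic_ker {f : M →ₗ[S] M} {g : N →ₗ[S] N} {φ : M →ₗ[S] N}
    {P₀ P₁ P₂ : Submodule S M} (hf : f ∘ₗ f = 0) (hφ : φ ∘ₗ f = g ∘ₗ φ)
    (h₂₁ : P₂.map f ≤ P₁) (h₁₀ : P₁.map f ≤ P₀)
    (hK₁ : Subsingleton (homologyOf f (P₁ ⊓ LinearMap.ker φ) (P₂ ⊓ LinearMap.ker φ)))
    (hK₀ : Subsingleton (homologyOf f (P₀ ⊓ LinearMap.ker φ) (P₁ ⊓ LinearMap.ker φ))) :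
    Nonempty (homologyOf f P₁ P₂ ≃ₗ[S] homologyOf g (P₁.map φ) (P₂.map φ)) := by
  have hff (x : M) : f (f x) = 0 := LinearMap.congr_fun hf x
  have hφf (x : M) : φ (f x) = g (φ x) := LinearMap.congr_fun hφ x
  rw [subsingleton_homologyOf_iff] at hK₁ hK₀
  let φcyc : ↥(kerOf f ⊓ P₁) →ₗ[S] ↥(kerOf g ⊓ P₁.map φ) := φ.restrict fun z hz =>
    ⟨by simp [kerOf, ← hφf, LinearMap.mem_ker.1 hz.1], Submodule.mem_map_of_mem hz.2⟩
  have hφcyc : Function.Surjective φcyc := by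
    rintro ⟨_, hy, x, hx, rfl⟩
    have hφfx : φ (f x) = 0 := (hφf x).trans hy
    obtain ⟨e, ⟨he, hφe⟩, hfe⟩ := hK₀ ⟨hff x, h₁₀ (Submodule.mem_map_of_mem hx), hφfx⟩
    exact ⟨⟨x - e, by simp [kerOf, hfe], sub_mem hx he⟩,
      Subtype.ext ((map_sub φ x e).trans (by rw [LinearMap.mem_ker.1 hφe, sub_zero]))⟩
  refine homologyOf_equiv_of_surjective (homologyClass g (P₁.map φ) (P₂.map φ) ∘ₗ φcyc)
    ((homologyClass_surjective g _ _).comp hφcyc) fun ⟨z, hz⟩ => ?_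
  refine homologyClass_eq_zero_iff.trans ?_
  change φ z ∈ (P₂.map φ).map g ↔ z ∈ P₂.map f
  constructor
  · rintro ⟨_, ⟨x, hx, rfl⟩, hxz⟩
    obtain ⟨e, ⟨he, -⟩, hfe⟩ := hK₁ (x := z - f x)
      ⟨by simp [hff, LinearMap.mem_ker.1 hz.1],
        sub_mem hz.2 (h₂₁ (Submodule.mem_map_of_mem hx)), by simp [hφf, hxz]⟩
    exact ⟨e + x, add_mem he hx, by rw [map_add, hfe, sub_add_cancel]⟩
  · rintro ⟨e, he, rfl⟩
    exact hφf e ▸ Submodule.mem_map_of_mem (Submodule.mem_map_of_mem he)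

end HomologyOf

section Signs

/-- The sign `(-1)^i` with which the face opposite to `v` occurs in the boundary of a simplex `σ`
containing `v`, where `i` is the position of `v` in `σ`; it is also used for `v ∉ σ`. -/
def vertexSign (v : ℕ) (σ : Finset ℕ) : ℤ := (-1) ^ (σ.filter (· < v)).card

theorem vertexSign_mul_self (v : ℕ) (σ : Finset ℕ) : vertexSign v σ * vertexSign v σ = 1 := by
  rw [vertexSign, ← mul_pow, neg_one_mul, neg_neg, one_pow]

theorem vertexSign_union {σ τ : Finset ℕ} (h : Disjoint σ τ) (v : ℕ) :
    vertexSign v (σ ∪ τ) = vertexSign v σ * vertexSign v τ := by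
  rw [vertexSign, Finset.filter_union,
    Finset.card_union_of_disjoint (Finset.disjoint_filter_filter h), pow_add]
  rfl

theorem vertexSign_insert {m : ℕ} {σ : Finset ℕ} (h : m ∉ σ) (v : ℕ) :
    vertexSign v (insert m σ) = vertexSign v {m} * vertexSign v σ := by
  rw [Finset.insert_eq, vertexSign_union (Finset.disjoint_singleton_left.2 h)]

theorem vertexSign_insert_self (v : ℕ) (σ : Finset ℕ) :
    vertexSign v (insert v σ) = vertexSign v σ := by
  simp [vertexSign, Finset.filter_insert]

theorem vertexSign_singleton_mul_swap {v m : ℕ} (h : v ≠ m) :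
    vertexSign v {m} * vertexSign m {v} = -1 := by
  rcases h.lt_or_gt with h | h <;> simp [vertexSign, Finset.filter_singleton, h, h.not_gt]

theorem vertexSign_mul_vertexSign_insert {v m : ℕ} {σ : Finset ℕ} (hv : v ∈ σ) (hm : m ∉ σ) :
    vertexSign m σ * vertexSign v (insert m σ) =
      -(vertexSign v σ * vertexSign m (σ.erase v)) := by
  have hσ : vertexSign m σ = vertexSign m {v} * vertexSign m (σ.erase v) := by
    rw [← vertexSign_insert (Finset.notMem_erase v σ), Finset.insert_erase hv]
  rw [hσ, vertexSign_insert hm]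
  linear_combination vertexSign m (σ.erase v) * vertexSign v σ *
    vertexSign_singleton_mul_swap (ne_of_mem_of_not_mem hv hm)

/-- The sign of the shuffle sorting the vertices of `σ \ B` followed by those of `B`, for
`B ⊆ σ`. -/
def shuffleSign (B σ : Finset ℕ) : ℤ := ∏ x ∈ σ \ B, vertexSign x B

theorem shuffleSign_mul_self (B σ : Finset ℕ) : shuffleSign B σ * shuffleSign B σ = 1 := by
  simp only [shuffleSign, ← Finset.prod_mul_distrib, vertexSign_mul_self, Finset.prod_const_one]

theorem vertexSign_mul_shuffleSign_erase {B σ : Finset ℕ} (hB : B ⊆ σ) {v : ℕ} (hv : v ∈ σ \ B) :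
    vertexSign v σ * shuffleSign B (σ.erase v) = shuffleSign B σ * vertexSign v (σ \ B) := by
  have hσ : vertexSign v σ = vertexSign v (σ \ B) * vertexSign v B := by
    rw [← vertexSign_union Finset.sdiff_disjoint, Finset.sdiff_union_of_subset hB]
  rw [hσ, shuffleSign, shuffleSign, Finset.erase_sdiff_comm, ← Finset.mul_prod_erase _ _ hv]
  ring

end Signs

section Chains

variable (S : Type) [CommRing S] (A : Type) [CommRing A] [Algebra S A]

variable {S A} in
theorem sDeg_le {F : Set (Finset ℕ)} {j : ℤ} {P : Submodule S (Finset ℕ →₀ A)}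
    (h : ∀ σ ∈ F, (σ.card : ℤ) = j + 1 → ∀ a, Finsupp.single σ a ∈ P) : sDeg S A F j ≤ P := by
  intro z hz
  rw [← Finsupp.sum_single z]
  exact P.sum_mem fun σ hσ =>
    have hσF := (Finsupp.mem_supported S z).1 hz hσ
    h σ hσF.1 hσF.2 _

variable {A} in
theorem single_mem_sDeg {F : Set (Finset ℕ)} {j : ℤ} {σ : Finset ℕ} (hσ : σ ∈ F)
    (hj : (σ.card : ℤ) = j + 1) (a : A) : Finsupp.single σ a ∈ sDeg S A F j :=
  Finsupp.single_mem_supported S a ⟨hσ, hj⟩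

theorem sD_single (σ : Finset ℕ) (a : A) :
    sD S A (Finsupp.single σ a) =
      ∑ v ∈ σ, vertexSign v σ • Finsupp.single (σ.erase v) a := by
  simp [sD, sBnd, vertexSign]

theorem map_sD_sDeg_le {F : Set (Finset ℕ)} (hF : IsLowerSet F) {i j : ℤ} (hij : i = j + 1) :
    (sDeg S A F i).map (sD S A) ≤ sDeg S A F j := by
  refine Submodule.map_le_iff_le_comap.2 (sDeg_le fun σ hσ hi a => ?_)
  rw [Submodule.mem_comap, sD_single]
  refine Submodule.sum_mem _ fun v hv => zsmul_mem (single_mem_sDeg S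
    (hF (Finset.erase_subset v σ) hσ) ?_ a) _
  have := Finset.card_erase_add_one hv
  lia

/-- The operator joining the vertex `m` to each face not containing it, with the sign that makes
it a contracting homotopy of the complex of all finite subsets of `ℕ`. -/
noncomputable def coneHomotopy (m : ℕ) : (Finset ℕ →₀ A) →ₗ[S] (Finset ℕ →₀ A) :=
  Finsupp.lsum ℕ fun σ =>
    if m ∈ σ then 0 else vertexSign m σ • Finsupp.lsingle (insert m σ)

theorem coneHomotopy_single_of_mem {m : ℕ} {σ : Finset ℕ} (h : m ∈ σ) (a : A) :
    coneHomotopy S A m (Finsupp.single σ a) = 0 := by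
  simp [coneHomotopy, h]

theorem coneHomotopy_single_of_notMem {m : ℕ} {σ : Finset ℕ} (h : m ∉ σ) (a : A) :
    coneHomotopy S A m (Finsupp.single σ a) =
      vertexSign m σ • Finsupp.single (insert m σ) a := by
  simp [coneHomotopy, h]

theorem coneHomotopy_sD_single_of_mem {m : ℕ} {σ : Finset ℕ} (h : m ∈ σ) (a : A) :
    coneHomotopy S A m (sD S A (Finsupp.single σ a)) = Finsupp.single σ a := by
  have hsign : vertexSign m σ = vertexSign m (σ.erase m) := by
    rw [← vertexSign_insert_self m (σ.erase m), Finset.insert_erase h]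
  rw [sD_single, map_sum, Finset.sum_eq_single_of_mem m h fun v _ hv => ?_]
  · rw [map_zsmul, coneHomotopy_single_of_notMem S A (Finset.notMem_erase m σ),
      Finset.insert_erase h, smul_smul, hsign, vertexSign_mul_self, one_smul]
  · rw [map_zsmul, coneHomotopy_single_of_mem S A (Finset.mem_erase.2 ⟨hv.symm, h⟩), smul_zero]

theorem sD_coneHomotopy_single_of_notMem {m : ℕ} {σ : Finset ℕ} (h : m ∉ σ) (a : A) :
    sD S A (coneHomotopy S A m (Finsupp.single σ a)) =
      Finsupp.single σ a - coneHomotopy S A m (sD S A (Finsupp.single σ a)) := by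
  rw [coneHomotopy_single_of_notMem S A h, map_zsmul, sD_single, sD_single, Finset.sum_insert h,
    smul_add, Finset.smul_sum, map_sum, sub_eq_add_neg, ← Finset.sum_neg_distrib]
  congr 1
  · rw [vertexSign_insert_self, Finset.erase_insert h, smul_smul, vertexSign_mul_self, one_smul]
  · refine Finset.sum_congr rfl fun v hv => ?_
    rw [map_zsmul, coneHomotopy_single_of_notMem S A (fun hm => h (Finset.mem_of_mem_erase hm)),
      Finset.erase_insert_of_ne (ne_of_mem_of_not_mem hv h).symm, smul_smul, smul_smul,
      vertexSign_mul_vertexSign_insert hv h, neg_smul]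

theorem sD_coneHomotopy_add (m : ℕ) (z : Finset ℕ →₀ A) :
    sD S A (coneHomotopy S A m z) + coneHomotopy S A m (sD S A z) = z := by
  induction z using Finsupp.induction_linear with
  | zero => simp
  | add x y hx hy =>
    simp only [map_add]
    rw [add_add_add_comm, hx, hy]
  | single σ a =>
    by_cases h : m ∈ σ
    · rw [coneHomotopy_single_of_mem S A h, map_zero, zero_add, coneHomotopy_sD_single_of_mem S A h]
    · rw [sD_coneHomotopy_single_of_notMem S A h, sub_add_cancel]

/- If `h` is a cone homotopy, then `∂∂h = ∂(1 - h∂) = ∂ - (1 - h∂)∂ = h∂∂`, so the vanishing of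
`∂∂` on a face passes to its join with a new vertex. -/
theorem sD_comp_sD : sD S A ∘ₗ sD S A = 0 := by
  refine Finsupp.lhom_ext fun σ a => ?_
  change sD S A (sD S A (Finsupp.single σ a)) = 0
  induction σ using Finset.induction_on with
  | empty => simp [sD_single]
  | insert m σ hm ih =>
    have hhom (x : Finset ℕ →₀ A) : sD S A (coneHomotopy S A m x) =
        x - coneHomotopy S A m (sD S A x) := eq_sub_of_add_eq (sD_coneHomotopy_add S A m x)
    have hjoin : Finsupp.single (insert m σ) a =
        vertexSign m σ • coneHomotopy S A m (Finsupp.single σ a) := by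
      rw [coneHomotopy_single_of_notMem S A hm, smul_smul, vertexSign_mul_self, one_smul]
    rw [hjoin, map_zsmul, map_zsmul, hhom, map_sub, hhom, sub_sub_cancel, ih, map_zero, smul_zero]

/-- All reduced homology of the complex with faces `F` vanishes. -/
def HasTrivialHomology (F : Set (Finset ℕ)) : Prop := ∀ j, Subsingleton (SH S A F j)

/-- The complex with faces `F` has the reduced homology of a sphere of dimension `i`; the complex
`{∅}` counts as a sphere of dimension `-1`. -/
def HasSphereHomology (F : Set (Finset ℕ)) (i : ℤ) : Prop :=
  Nonempty (SH S A F i ≃ₗ[S] A) ∧ ∀ j, j ≠ i → Subsingleton (SH S A F j)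

theorem hasTrivialHomology_of_cone {F : Set (Finset ℕ)} (m : ℕ) (hF : ∀ σ ∈ F, insert m σ ∈ F) :
    HasTrivialHomology S A F := by
  refine fun j => subsingleton_homologyOf_iff.2 fun z hz => ?_
  have hcone : sDeg S A F j ≤ (sDeg S A F (j + 1)).comap (coneHomotopy S A m) := by
    refine sDeg_le fun σ hσ hj a => ?_
    rw [Submodule.mem_comap]
    by_cases hm : m ∈ σ
    · rw [coneHomotopy_single_of_mem S A hm]
      exact zero_mem _
    · rw [coneHomotopy_single_of_notMem S A hm]
      refine zsmul_mem (single_mem_sDeg S (hF σ hσ) ?_ a) _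
      rw [Finset.card_insert_of_notMem hm, Nat.cast_add_one, hj]
  refine ⟨coneHomotopy S A m z, hcone hz.2, ?_⟩
  simpa [LinearMap.mem_ker.1 hz.1] using sD_coneHomotopy_add S A m z

theorem sDeg_singleton_empty_le_ker_sD (j : ℤ) : sDeg S A {∅} j ≤ LinearMap.ker (sD S A) := by
  refine sDeg_le fun σ hσ _ a => ?_
  rw [Set.mem_singleton_iff.1 hσ, LinearMap.mem_ker, sD_single, Finset.sum_empty]

theorem hasSphereHomology_singleton_empty : HasSphereHomology S A {∅} (-1) := by
  refine ⟨?_, fun j hj => subsingleton_homologyOf_iff.2 ?_⟩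
  · have hbdry : (sDeg S A {∅} (-1 + 1)).map (sD S A) = ⊥ :=
      LinearMap.le_ker_iff_map.1 (sDeg_singleton_empty_le_ker_sD S A _)
    refine homologyOf_equiv_of_surjective (Finsupp.lapply ∅ ∘ₗ Submodule.subtype _)
      (fun a => ?_) fun ⟨z, hz⟩ => ?_
    · have ha := single_mem_sDeg S (Set.mem_singleton ∅) (j := -1) (by simp) a
      exact ⟨⟨_, sDeg_singleton_empty_le_ker_sD S A _ ha, ha⟩, by simp⟩
    · have hsupp : z.support ⊆ {∅} := fun σ hσ =>
        Finset.mem_singleton.2 ((Finsupp.mem_supported S z).1 hz.2 hσ).1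
      obtain ⟨a, rfl⟩ := Finsupp.support_subset_singleton'.1 hsupp
      rw [hbdry]
      simp
  · refine inf_le_right.trans ((sDeg_le fun σ hσ hcard a => ?_).trans bot_le)
    rw [Set.mem_singleton_iff.1 hσ, Finset.card_empty] at hcard
    lia

end Chains

section FaceLink

/-- The deletion of the face `B` from the complex with faces `F`. -/
def faceDeletion (F : Set (Finset ℕ)) (B : Finset ℕ) : Set (Finset ℕ) := {σ ∈ F | ¬ B ⊆ σ}

/-- The link of the face `B` in the complex with faces `F`. -/
def faceLink (F : Set (Finset ℕ)) (B : Finset ℕ) : Set (Finset ℕ) :=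
  {τ | Disjoint τ B ∧ τ ∪ B ∈ F}

variable (S : Type) [CommRing S] (A : Type) [CommRing A] [Algebra S A]

/-- The operator removing `B` from the faces containing it and killing the other faces; the shuffle
sign makes it commute with the boundary. -/
noncomputable def faceContraction (B : Finset ℕ) : (Finset ℕ →₀ A) →ₗ[S] (Finset ℕ →₀ A) :=
  Finsupp.lsum ℕ fun σ =>
    if B ⊆ σ then shuffleSign B σ • Finsupp.lsingle (σ \ B) else 0

theorem faceContraction_single_of_subset {B σ : Finset ℕ} (h : B ⊆ σ) (a : A) :
    faceContraction S A B (Finsupp.single σ a) = shuffleSign B σ • Finsupp.single (σ \ B) a := by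
  simp [faceContraction, h]

theorem faceContraction_single_of_not_subset {B σ : Finset ℕ} (h : ¬ B ⊆ σ) (a : A) :
    faceContraction S A B (Finsupp.single σ a) = 0 := by
  simp [faceContraction, h]

theorem faceContraction_comp_sD (B : Finset ℕ) :
    faceContraction S A B ∘ₗ sD S A = sD S A ∘ₗ faceContraction S A B := by
  refine Finsupp.lhom_ext fun σ a => ?_
  rw [LinearMap.comp_apply, LinearMap.comp_apply, sD_single, map_sum]
  by_cases hB : B ⊆ σ
  · rw [faceContraction_single_of_subset S A hB, map_zsmul, sD_single, Finset.smul_sum,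
      ← Finset.sum_subset (Finset.sdiff_subset (s := σ) (t := B)) fun v hv hvB => ?_]
    · refine Finset.sum_congr rfl fun v hv => ?_
      have hBv : B ⊆ σ.erase v := Finset.subset_erase.2 ⟨hB, (Finset.mem_sdiff.1 hv).2⟩
      rw [map_zsmul, faceContraction_single_of_subset S A hBv, smul_smul, smul_smul,
        vertexSign_mul_shuffleSign_erase hB hv, Finset.erase_sdiff_comm]
    · have hBv : ¬ B ⊆ σ.erase v := fun h =>
        hvB (Finset.mem_sdiff.2 ⟨hv, (Finset.subset_erase.1 h).2⟩)
      rw [map_zsmul, faceContraction_single_of_not_subset S A hBv, smul_zero]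
  · rw [faceContraction_single_of_not_subset S A hB, map_zero]
    refine Finset.sum_eq_zero fun v _ => ?_
    rw [map_zsmul, faceContraction_single_of_not_subset S A
      (fun h => hB (h.trans (Finset.erase_subset v σ))), smul_zero]

theorem faceContraction_apply_sdiff {B σ : Finset ℕ} (hB : B ⊆ σ) (z : Finset ℕ →₀ A) :
    faceContraction S A B z (σ \ B) = shuffleSign B σ • z σ := by
  induction z using Finsupp.induction_linear with
  | zero => simp
  | add x y hx hy => simp [hx, hy]
  | single ρ a =>
    by_cases hρ : B ⊆ ρ
    · rw [faceContraction_single_of_subset S A hρ, Finsupp.smul_apply]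
      obtain rfl | hne := eq_or_ne ρ σ
      · simp
      · have hne' : ρ \ B ≠ σ \ B := fun h => hne <| by
          rw [← Finset.sdiff_union_of_subset hρ, h, Finset.sdiff_union_of_subset hB]
        rw [Finsupp.single_eq_of_ne' hne, Finsupp.single_eq_of_ne' hne', smul_zero, smul_zero]
    · have hne : ρ ≠ σ := fun h => hρ (h ▸ hB)
      rw [faceContraction_single_of_not_subset S A hρ, Finsupp.single_eq_of_ne' hne, smul_zero,
        Finsupp.zero_apply]

theorem sDeg_inf_ker_faceContraction (F : Set (Finset ℕ)) (B : Finset ℕ) (j : ℤ) :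
    sDeg S A F j ⊓ LinearMap.ker (faceContraction S A B) = sDeg S A (faceDeletion F B) j := by
  apply le_antisymm
  · rintro z ⟨hz, hz0⟩
    refine (Finsupp.mem_supported S z).2 fun σ hσ => ?_
    obtain ⟨hσF, hj⟩ := (Finsupp.mem_supported S z).1 hz hσ
    refine ⟨⟨hσF, fun hB => Finsupp.mem_support_iff.1 hσ ?_⟩, hj⟩
    rw [← one_smul ℤ (z σ), ← shuffleSign_mul_self B σ, mul_smul,
      ← faceContraction_apply_sdiff S A hB, LinearMap.mem_ker.1 hz0, Finsupp.zero_apply, smul_zero]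
  · exact sDeg_le fun σ hσ hj a =>
      ⟨single_mem_sDeg S hσ.1 hj a, faceContraction_single_of_not_subset S A hσ.2 a⟩

theorem map_faceContraction_sDeg (F : Set (Finset ℕ)) (B : Finset ℕ) {i j : ℤ}
    (hij : i = j + B.card) :
    (sDeg S A F i).map (faceContraction S A B) = sDeg S A (faceLink F B) j := by
  apply le_antisymm
  · refine Submodule.map_le_iff_le_comap.2 (sDeg_le fun σ hσ hi a => ?_)
    rw [Submodule.mem_comap]
    by_cases hB : B ⊆ σ
    · rw [faceContraction_single_of_subset S A hB]
      have hlink : σ \ B ∈ faceLink F B :=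
        ⟨Finset.sdiff_disjoint, by rwa [Finset.sdiff_union_of_subset hB]⟩
      refine zsmul_mem (single_mem_sDeg S hlink ?_ a) _
      have := Finset.card_sdiff_add_card_eq_card hB
      lia
    · rw [faceContraction_single_of_not_subset S A hB]
      exact zero_mem _
  · refine sDeg_le fun τ ⟨hdisj, hτ⟩ hj a => ?_
    refine ⟨shuffleSign B (τ ∪ B) • Finsupp.single (τ ∪ B) a,
      zsmul_mem (single_mem_sDeg S hτ ?_ a) _, ?_⟩
    · rw [Finset.card_union_of_disjoint hdisj]
      lia
    · rw [map_zsmul, faceContraction_single_of_subset S A Finset.subset_union_right, smul_smul,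
        shuffleSign_mul_self, one_smul, Finset.union_sdiff_cancel_right hdisj]

theorem SH_equiv_SH_faceLink {F : Set (Finset ℕ)} (hF : IsLowerSet F) {B : Finset ℕ}
    (hB : HasTrivialHomology S A (faceDeletion F B)) {i j : ℤ} (hij : i = j + B.card) :
    Nonempty (SH S A F i ≃ₗ[S] SH S A (faceLink F B) j) := by
  have hdel (k : ℤ) : Subsingleton (homologyOf (sD S A)
      (sDeg S A F k ⊓ LinearMap.ker (faceContraction S A B))
      (sDeg S A F (k + 1) ⊓ LinearMap.ker (faceContraction S A B))) := by
    simpa only [sDeg_inf_ker_faceContraction, SH] using hB k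
  have hequiv := homologyOf_equiv_of_acyclic_ker (sD_comp_sD S A) (faceContraction_comp_sD S A B)
    (map_sD_sDeg_le S A hF rfl) (map_sD_sDeg_le S A hF (sub_add_cancel i 1).symm) (hdel i)
    (by simpa only [sub_add_cancel] using hdel (i - 1))
  rwa [map_faceContraction_sDeg S A F B hij,
    map_faceContraction_sDeg S A F B (show i + 1 = j + 1 + B.card by lia)] at hequiv

variable {S A}

theorem HasTrivialHomology.of_faceLink {F : Set (Finset ℕ)} (hF : IsLowerSet F) {B : Finset ℕ}
    (hB : HasTrivialHomology S A (faceDeletion F B))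
    (hlink : HasTrivialHomology S A (faceLink F B)) : HasTrivialHomology S A F := by
  intro i
  obtain ⟨e⟩ := SH_equiv_SH_faceLink S A hF hB (sub_add_cancel i B.card).symm
  have := hlink (i - B.card)
  exact e.toEquiv.subsingleton

theorem HasSphereHomology.of_faceLink {F : Set (Finset ℕ)} (hF : IsLowerSet F) {B : Finset ℕ}
    (hB : HasTrivialHomology S A (faceDeletion F B)) {i : ℤ}
    (hlink : HasSphereHomology S A (faceLink F B) i) : HasSphereHomology S A F (i + B.card) := by
  refine ⟨?_, fun j hj => ?_⟩
  · obtain ⟨e⟩ := SH_equiv_SH_faceLink S A hF hB (i := i + B.card) rfl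
    exact hlink.1.map e.trans
  · obtain ⟨e⟩ := SH_equiv_SH_faceLink S A hF hB (sub_add_cancel j B.card).symm
    have := hlink.2 (j - B.card) (by lia)
    exact e.toEquiv.subsingleton

end FaceLink

section PathComplex

theorem RunsLE.anti {r : ℕ} {σ τ : Finset ℕ} (hτ : RunsLE r τ) (h : σ ⊆ τ) : RunsLE r σ :=
  fun a ha => hτ a (ha.trans h)

theorem isLowerSet_IndFaces (r n : ℕ) : IsLowerSet (IndFaces r n) :=
  fun _ _ hle hσ => ⟨hle.trans hσ.1, hσ.2.anti hle⟩

theorem mem_IndFaces {r n : ℕ} {σ : Finset ℕ} :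
    σ ∈ IndFaces r n ↔ σ ⊆ Finset.Icc 1 n ∧ RunsLE r σ := Iff.rfl

theorem IndFaces_zero (r : ℕ) : IndFaces r 0 = {∅} := by
  ext σ
  simp +contextual [mem_IndFaces, RunsLE]

theorem insert_last_mem_faceDeletion_IndFaces {r m : ℕ} {σ : Finset ℕ}
    (hσ : σ ∈ faceDeletion (IndFaces r (m + r + 1)) (Finset.Ioc m (m + r))) :
    insert (m + r + 1) σ ∈ faceDeletion (IndFaces r (m + r + 1)) (Finset.Ioc m (m + r)) := by
  obtain ⟨⟨hle, hruns⟩, hB⟩ := hσ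
  have hB' : ¬ Finset.Ioc m (m + r) ⊆ insert (m + r + 1) σ := by
    rwa [Finset.subset_insert_iff_of_notMem (by simp)]
  have hle' : insert (m + r + 1) σ ⊆ Finset.Icc 1 (m + r + 1) :=
    Finset.insert_subset (by simp) hle
  refine ⟨⟨hle', fun a ha => ?_⟩, hB'⟩
  have har := Finset.mem_Icc.1 (hle' (ha (Finset.right_mem_Icc.2 (Nat.le_add_right a r))))
  rcases har.2.lt_or_eq with hlt | heq
  · refine hruns a ((Finset.subset_insert_iff_of_notMem fun hlast => ?_).1 ha)
    exact hlt.not_ge (Finset.mem_Icc.1 hlast).2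
  · refine hB' (Finset.Subset.trans (fun x hx => ?_) ha)
    rw [Finset.mem_Ioc] at hx
    rw [Finset.mem_Icc]
    lia

theorem faceLink_IndFaces_subset (r m : ℕ) :
    faceLink (IndFaces r (m + r + 1)) (Finset.Ioc m (m + r)) ⊆ IndFaces r (m - 1) := by
  rintro τ ⟨hdisj, hle, hruns⟩
  refine ⟨fun x hx => ?_, hruns.anti Finset.subset_union_left⟩
  have hxm : x ≠ m := by
    rintro rfl
    refine hruns x ?_
    rw [← Finset.Ioc_insert_left (Nat.le_add_right x r)]
    exact Finset.insert_subset (Finset.mem_union_left _ hx) Finset.subset_union_right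
  have hxlast : x ≠ m + r + 1 := by
    rintro rfl
    refine hruns (m + 1) fun y hy => ?_
    rw [Finset.mem_Icc] at hy
    obtain rfl | hne := eq_or_ne y (m + r + 1)
    · exact Finset.mem_union_left _ hx
    · exact Finset.mem_union_right _ (Finset.mem_Ioc.2 (by lia))
  have hxn := Finset.mem_Icc.1 (hle (Finset.mem_union_left _ hx))
  have hxB := Finset.disjoint_left.1 hdisj hx
  rw [Finset.mem_Ioc] at hxB
  rw [Finset.mem_Icc]
  lia

theorem IndFaces_subset_faceLink (r m : ℕ) :
    IndFaces r (m - 1) ⊆ faceLink (IndFaces r (m + r + 1)) (Finset.Ioc m (m + r)) := by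
  rintro τ ⟨hle, hruns⟩
  have hτ {x : ℕ} (hx : x ∈ τ) : 1 ≤ x ∧ x < m := by
    have := Finset.mem_Icc.1 (hle hx)
    lia
  have hunion {x : ℕ} (hx : x ∈ τ ∪ Finset.Ioc m (m + r)) : 1 ≤ x ∧ x ≤ m + r ∧ x ≠ m := by
    rcases Finset.mem_union.1 hx with hx | hx
    · have := hτ hx
      lia
    · rw [Finset.mem_Ioc] at hx
      lia
  refine ⟨Finset.disjoint_left.2 fun x hx hxB => ?_, fun x hx => ?_, fun a ha => ?_⟩
  · exact (hτ hx).2.asymm (Finset.mem_Ioc.1 hxB).1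
  · have := hunion hx
    rw [Finset.mem_Icc]
    lia
  · have hlast := hunion (ha (Finset.right_mem_Icc.2 (Nat.le_add_right a r)))
    have hm : m ∉ Finset.Icc a (a + r) := fun hm => (hunion (ha hm)).2.2 rfl
    refine hruns a fun x hx => (Finset.mem_union.1 (ha hx)).resolve_right fun hxB => ?_
    rw [Finset.mem_Icc] at hm hx
    rw [Finset.mem_Ioc] at hxB
    lia

/- For `m = 0` the truncated `m - 1 = 0` gives the right link `{∅}`. -/
theorem faceLink_IndFaces (r m : ℕ) :
    faceLink (IndFaces r (m + r + 1)) (Finset.Ioc m (m + r)) = IndFaces r (m - 1) :=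
  (faceLink_IndFaces_subset r m).antisymm (IndFaces_subset_faceLink r m)

theorem insert_mem_IndFaces_of_le {r n : ℕ} (hn : 1 ≤ n) (hr : n ≤ r) {σ : Finset ℕ}
    (hσ : σ ∈ IndFaces r n) : insert n σ ∈ IndFaces r n := by
  have hle : insert n σ ⊆ Finset.Icc 1 n := Finset.insert_subset (by simp [hn]) hσ.1
  refine ⟨hle, fun a ha => ?_⟩
  have := Finset.card_le_card (ha.trans hle)
  simp only [Nat.card_Icc] at this
  lia

variable (S : Type) [CommRing S] (A : Type) [CommRing A] [Algebra S A]

theorem hasTrivialHomology_faceDeletion_IndFaces (r m : ℕ) :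
    HasTrivialHomology S A (faceDeletion (IndFaces r (m + r + 1)) (Finset.Ioc m (m + r))) :=
  hasTrivialHomology_of_cone S A (m + r + 1) fun _ => insert_last_mem_faceDeletion_IndFaces

variable {S A}

theorem HasTrivialHomology.indFaces_add {r m : ℕ}
    (h : HasTrivialHomology S A (IndFaces r (m - 1))) :
    HasTrivialHomology S A (IndFaces r (m + r + 1)) :=
  .of_faceLink (isLowerSet_IndFaces r _) (hasTrivialHomology_faceDeletion_IndFaces S A r m)
    (by rwa [faceLink_IndFaces])

theorem HasSphereHomology.indFaces_add {r m : ℕ} {i : ℤ}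
    (h : HasSphereHomology S A (IndFaces r (m - 1)) i) :
    HasSphereHomology S A (IndFaces r (m + r + 1)) (i + r) := by
  rw [← faceLink_IndFaces r m] at h
  simpa using h.of_faceLink (isLowerSet_IndFaces r _)
    (hasTrivialHomology_faceDeletion_IndFaces S A r m)

variable (S A)

theorem hasSphereHomology_IndFaces {r n k : ℕ} (h : n = (r + 2) * k ∨ n + 1 = (r + 2) * k) :
    HasSphereHomology S A (IndFaces r n) ((k * r : ℕ) - 1) := by
  induction k generalizing n with
  | zero =>
    obtain rfl : n = 0 := by lia
    simpa [IndFaces_zero] using hasSphereHomology_singleton_empty S A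
  | succ k ih =>
    obtain ⟨m, rfl⟩ : ∃ m, n = m + r + 1 := ⟨n - (r + 1), by lia⟩
    have hm : m - 1 = (r + 2) * k ∨ m - 1 + 1 = (r + 2) * k := by lia
    convert (ih hm).indFaces_add using 1
    push_cast
    ring

theorem hasTrivialHomology_IndFaces {r n : ℕ} (h₀ : ¬ r + 2 ∣ n) (h₁ : ¬ r + 2 ∣ n + 1) :
    HasTrivialHomology S A (IndFaces r n) := by
  induction n using Nat.strong_induction_on with
  | _ n ih =>
  have hpos : 1 ≤ n := Nat.one_le_iff_ne_zero.2 fun hn => h₀ (hn ▸ dvd_zero _)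
  rcases Nat.lt_or_ge r n with hr | hr
  · obtain ⟨m, rfl⟩ : ∃ m, n = m + r + 1 := ⟨n - (r + 1), by lia⟩
    have hm : m ≠ 0 := by
      rintro rfl
      exact h₁ ⟨1, by ring⟩
    have hn : m + r + 1 = m - 1 + (r + 2) := by lia
    rw [hn, Nat.dvd_add_self_right] at h₀
    rw [hn, add_right_comm, Nat.dvd_add_self_right] at h₁
    exact (ih (m - 1) (by lia) h₀ h₁).indFaces_add
  · exact hasTrivialHomology_of_cone S A n fun _ => insert_mem_IndFaces_of_le hpos hr

theorem homology_independence_complex_path_general (n d : ℕ) (hn : 1 ≤ n) (hd : 2 ≤ d)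
    (j : ℤ) :
    ((∃ k : ℕ, 1 ≤ k ∧ (n = d * k ∨ n + 1 = d * k) ∧
        j + 1 = ((k * (d - 2) : ℕ) : ℤ)) →
      Nonempty (SH S A (IndFaces (d - 2) n) j ≃ₗ[S] A)) ∧
    ((¬ ∃ k : ℕ, 1 ≤ k ∧ (n = d * k ∨ n + 1 = d * k) ∧
        j + 1 = ((k * (d - 2) : ℕ) : ℤ)) →
      Subsingleton (SH S A (IndFaces (d - 2) n) j)) := by
  obtain ⟨r, rfl⟩ := Nat.exists_eq_add_of_le' hd
  rw [Nat.add_sub_cancel]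
  constructor
  · rintro ⟨k, -, hk, hj⟩
    rw [eq_sub_of_add_eq hj]
    exact (hasSphereHomology_IndFaces S A hk).1
  · intro hj
    by_cases hdvd : r + 2 ∣ n ∨ r + 2 ∣ n + 1
    · obtain ⟨k, hk⟩ := exists_or.2 hdvd
      have hk0 : k ≠ 0 := by
        rintro rfl
        lia
      exact (hasSphereHomology_IndFaces S A hk).2 j fun hjk =>
        hj ⟨k, Nat.one_le_iff_ne_zero.2 hk0, hk, by rw [hjk, sub_add_cancel]⟩
    · rw [not_or] at hdvd
      exact hasTrivialHomology_IndFaces S A hdvd.1 hdvd.2 j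

end PathComplex

/--
The reduced rational homology of the `(d-2)`-independence complex of the path
on `n` vertices: `H̃_j(Ind_{d-2}(A_n); ℚ) ≅ ℚ` if `n = dk` or `n = dk - 1` for
some `k ≥ 1` and `j = k(d-2) - 1`, and `H̃_j(Ind_{d-2}(A_n); ℚ) = 0` in all
other cases.
-/
theorem homology_independence_complex_path (n d : ℕ) (hn : 1 ≤ n) (hd : 2 ≤ d)
    (j : ℤ) :
    ((∃ k : ℕ, 1 ≤ k ∧ (n = d * k ∨ n + 1 = d * k) ∧
        j + 1 = ((k * (d - 2) : ℕ) : ℤ)) →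
      Nonempty (SH ℚ ℚ (IndFaces (d - 2) n) j ≃ₗ[ℚ] ℚ)) ∧
    ((¬ ∃ k : ℕ, 1 ≤ k ∧ (n = d * k ∨ n + 1 = d * k) ∧
        j + 1 = ((k * (d - 2) : ℕ) : ℤ)) →
      Subsingleton (SH ℚ ℚ (IndFaces (d - 2) n) j)) :=
  homology_independence_complex_path_general ℚ ℚ n d hn hd j
end

section
/- Let d ≥ 2, 0 ≤ f ≤ d − 1, and n ≥ f be integers, and let K_{n,f} = {σ ⊆ {1, …, n} : {1, …, f} ⊆ σ}. There exists an acyclic matching M on K_{n,f} (ordered by inclusion), weighted with respect to v_d, such that every pair (τ, σ) ∈ M satisfies σ = τ ∪ {v} for a vertex v with v ≡ f + 1 or v ≡ 0 (mod d), and whose critical elements are exactly the following: (i) if n = f, the unique critical element is {1, …, f}; (ii) if f ≤ d − 2, n > f and n = kd + f with k ≥ 1, there are exactly two critical elements, τ₀ = {i ∈ {1,…,n} : i mod d ∉ {0, f+1}} and σ₀ = τ₀ ∪ {kd}, with v_d(τ₀) = 0 and v_d(σ₀) = 1; (iii) if f ≤ d − 2, n > f and n = kd − 1 with k ≥ 1,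 there are exactly two critical elements, τ₀ = {i ∈ {1,…,n} : i mod d ∉ {0, f+1}} and σ₀ = τ₀ ∪ {(k−1)d + f + 1}, with v_d(τ₀) = 0 and v_d(σ₀) = 1; (iv) in all other cases (in particular whenever n > f = d − 1, or n ≢ f and n ≢ −1 mod d) the matching is perfect. Moreover, in cases (ii) and (iii) the only alternating path between the two critical elements is the trivial one σ₀ ⊃ τ₀. -/
/-- The number of consecutive elements of `σ` ending at `x`
(the position of `x` within its maximal run, `0` if `x ∉ σ`). -/
def leftRun (σ : Finset ℕ) (x : ℕ) : ℕ :=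
  (σ.filter fun y => y ≤ x ∧ Finset.Icc y x ⊆ σ).card

/-- The `φ_d`-weight of type `A`: the sum over the maximal runs of consecutive
integers of `σ`, of sizes `n_1, …, n_m`, of `⌊(n_i + 1)/d⌋`. -/
def vA (d : ℕ) (σ : Finset ℕ) : ℕ :=
  (σ.filter fun x => d ∣ (leftRun σ x + 1)).card

/-- A matching on a family `P` of finite sets: a set of pairs `(τ, σ)` with
`τ ⊆ σ`, `|σ| = |τ| + 1`, every element of `P` occurring in at most one pair. -/
def IsMatching (P : Set (Finset ℕ)) (M : Set (Finset ℕ × Finset ℕ)) : Prop :=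
  (∀ p ∈ M, p.1 ∈ P ∧ p.2 ∈ P ∧ p.1 ⊆ p.2 ∧ p.2.card = p.1.card + 1) ∧
  (∀ p ∈ M, ∀ q ∈ M, p ≠ q → p.1 ≠ q.1 ∧ p.1 ≠ q.2 ∧ p.2 ≠ q.1 ∧ p.2 ≠ q.2)

/-- An element of `P` is critical for `M` if it occurs in no pair of `M`. -/
def IsCritical (P : Set (Finset ℕ)) (M : Set (Finset ℕ × Finset ℕ))
    (σ : Finset ℕ) : Prop :=
  σ ∈ P ∧ ∀ p ∈ M, p.1 ≠ σ ∧ p.2 ≠ σ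

/-- Acyclicity of a matching: there is no closed alternating path
`σ_0 ⊳ τ_1 ⊲ σ_1 ⊳ τ_2 ⊲ ⋯ ⊳ τ_m ⊲ σ_m = σ_0` with `m ≥ 2`. -/
def IsAcyclic (M : Set (Finset ℕ × Finset ℕ)) : Prop :=
  ¬ ∃ (m : ℕ) (σs τs : ℕ → Finset ℕ), 2 ≤ m ∧ σs m = σs 0 ∧
      ∀ i, 1 ≤ i → i ≤ m →
        (τs i, σs i) ∈ M ∧ τs i ⊆ σs (i - 1) ∧
        (σs (i - 1)).card = (τs i).card + 1 ∧ (τs i, σs (i - 1)) ∉ M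

/-- A matching is weighted w.r.t. a weight function `v` if matched pairs have
equal weight. -/
def IsWeighted (v : Finset ℕ → ℕ) (M : Set (Finset ℕ × Finset ℕ)) : Prop :=
  ∀ p ∈ M, v p.1 = v p.2

/-- The only alternating path from the critical cell `σ` down to the critical
cell `τ` is the trivial one (`m = 0`, i.e. the single covering `σ ⊃ τ`). -/
def OnlyTrivialAltPath (M : Set (Finset ℕ × Finset ℕ)) (σ τ : Finset ℕ) : Prop :=
  ∀ (m : ℕ) (σs τs : ℕ → Finset ℕ),
    σs 0 = σ →
    (∀ i, 1 ≤ i → i ≤ m →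
      (τs i, σs i) ∈ M ∧ τs i ⊆ σs (i - 1) ∧
      (σs (i - 1)).card = (τs i).card + 1 ∧ (τs i, σs (i - 1)) ∉ M) →
    τ ⊆ σs m → (σs m).card = τ.card + 1 → m = 0

/-- The poset `K_{n,f}` of subsets of `{1, …, n}` containing `{1, …, f}`. -/
def Knf (n f : ℕ) : Set (Finset ℕ) :=
  {σ | σ ⊆ Finset.Icc 1 n ∧ Finset.Icc 1 f ⊆ σ}

/-- The bottom critical cell of `K_{n,f}`:
`τ₀ = {i ∈ {1, …, n} : i mod d ∉ {0, f+1}}`. -/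
def tau0 (d f n : ℕ) : Finset ℕ :=
  (Finset.Icc 1 n).filter fun i => i % d ≠ 0 ∧ i % d ≠ f + 1

/-!
Call a number congruent to `0` or `f + 1` modulo `d` a wall, and compare `σ` with the set of all
vertices that are not walls. Suppose `f + 1 < d`. At the first wall where `σ` departs from this
pattern, either a vertex between this wall and the next one is missing, and then toggling the wall
does not move the departure, or the wall and everything up to the next one is present, and then
toggling the next wall does not move it. The critical elements are those with no departure, or with
one whose toggle would exceed `n`.

Ordering the departures of the first kind increasingly and placing those of the second kind above
them, in decreasing order, gives a partial rank that is monotone for inclusion. Hence the rank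
strictly decreases along an alternating path, which gives acyclicity; and since a nontrivial
alternating path from `σ₀` to `τ₀` would have to start at a rank of the first kind and end at one of
the second kind, there is none.

The weight does not change because a toggle either takes place between two missing vertices at
distance less than `d`, or extends a run of `d - 1` vertices to one of `d` vertices, which may be
continued to the right.

If `f = d - 1`, toggling the vertex `d` alone suffices.
-/

section Order

variable {w : ℕ → ℕ} {j y : ℕ}

theorem notMem_range_of_lt_of_lt (hw : StrictMono w) (hjy : w j < y) (hyj : y < w (j + 1)) :
    y ∉ Set.range w := by
  rintro ⟨i, rfl⟩
  exact hw.monotone.ne_of_lt_of_lt_nat j hjy hyj i rfl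

theorem exists_le_lt_succ_of_strictMono (hw : StrictMono w) (hw₀ : w 0 = 0) (y : ℕ) :
    ∃ j, w j ≤ y ∧ y < w (j + 1) := by
  have hunion := iUnion_Ico_map_succ_eq_Ici (fun j => hw.monotone (bot_le : ⊥ ≤ j))
    hw.not_bddAbove_range_of_wellFoundedLT
  rw [Nat.bot_eq_zero, hw₀] at hunion
  have hy : y ∈ Set.Ici 0 := y.zero_le
  rw [← hunion] at hy
  simpa using hy

theorem isLowerSet_range_inlₗ {α β : Type*} [Preorder α] [Preorder β] :
    IsLowerSet (Set.range (Sum.inlₗ : α → α ⊕ₗ β)) := by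
  rintro _ (b | b) hba ⟨a, rfl⟩
  · exact ⟨b, rfl⟩
  · exact absurd hba Sum.Lex.not_inr_le_inl

end Order

section Weight

variable {d u v x y : ℕ} {σ τ : Finset ℕ}

theorem leftRun_le_sub (hu : u ∉ σ) (hux : u ≤ x) : leftRun σ x ≤ x - u := by
  rw [← Nat.card_Ioc, leftRun]
  refine Finset.card_le_card fun y hy => ?_
  obtain ⟨-, hyx, hrun⟩ := Finset.mem_filter.1 hy
  exact Finset.mem_Ioc.2 ⟨not_le.1 fun hyu => hu (hrun (Finset.mem_Icc.2 ⟨hyu, hux⟩)), hyx⟩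

theorem leftRun_eq_sub (hu : u ∉ σ) (hux : u ≤ x) (hrun : Finset.Ioc u x ⊆ σ) :
    leftRun σ x = x - u := by
  refine (leftRun_le_sub hu hux).antisymm ?_
  rw [← Nat.card_Ioc, leftRun]
  refine Finset.card_le_card fun y hy => Finset.mem_filter.2 ⟨hrun hy, ?_⟩
  rw [Finset.mem_Ioc] at hy
  exact ⟨hy.2, ((Finset.Icc_subset_Ioc_iff hy.2).2 ⟨hy.1, le_rfl⟩).trans hrun⟩

theorem leftRun_of_notMem (hx : x ∉ σ) : leftRun σ x = 0 := by
  simpa using leftRun_le_sub hx le_rfl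

theorem leftRun_succ (hx : x + 1 ∈ σ) : leftRun σ (x + 1) = leftRun σ x + 1 := by
  have hfilter : {y ∈ σ | y ≤ x + 1 ∧ Finset.Icc y (x + 1) ⊆ σ} =
      insert (x + 1) {y ∈ σ | y ≤ x ∧ Finset.Icc y x ⊆ σ} := by
    ext y
    rcases lt_trichotomy y (x + 1) with hy | rfl | hy
    · have hIcc : Finset.Icc y (x + 1) = insert (x + 1) (Finset.Icc y x) :=
        (Finset.insert_Icc_right_eq_Icc_succ hy.le).symm
      simp [hIcc, Finset.insert_subset_iff, hx, hy.le, hy.ne, Nat.lt_succ_iff.1 hy]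
    · simp [hx]
    · simp [hy.ne', hy.not_ge, (Nat.lt_of_succ_lt hy).not_ge]
  rw [leftRun, hfilter, Finset.card_insert_of_notMem (by simp), leftRun]

theorem leftRun_congr (h : ∀ y ≤ x, (y ∈ σ ↔ y ∈ τ)) : leftRun σ x = leftRun τ x := by
  have hIcc (y : ℕ) : Finset.Icc y x ⊆ σ ↔ Finset.Icc y x ⊆ τ :=
    forall₂_congr fun z hz => h z (Finset.mem_Icc.1 hz).2
  unfold leftRun
  congr 1
  ext y
  simp only [Finset.mem_filter, hIcc]
  exact and_congr_left fun hy => h y hy.1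

theorem leftRun_modEq_of_le (h : ∀ z, y < z → (z ∈ σ ↔ z ∈ τ))
    (hy : leftRun σ y ≡ leftRun τ y [MOD d]) (hyx : y ≤ x) :
    leftRun σ x ≡ leftRun τ x [MOD d] := by
  induction x, hyx using Nat.le_induction with
  | base => exact hy
  | succ x hyx ih =>
    have hx := h (x + 1) (Nat.lt_succ_of_le hyx)
    by_cases hxσ : x + 1 ∈ σ
    · rw [leftRun_succ hxσ, leftRun_succ (hx.1 hxσ)]
      exact ih.add_right 1
    · rw [leftRun_of_notMem hxσ, leftRun_of_notMem (mt hx.2 hxσ)]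

theorem not_dvd_leftRun_add_one (hu : u ∉ σ) (hux : u ≤ x) (hxu : x + 1 < u + d) :
    ¬ d ∣ leftRun σ x + 1 := by
  have := leftRun_le_sub hu hux
  exact Nat.not_dvd_of_pos_of_lt (Nat.succ_pos _) (by omega)

/-- Only the elements between `v` and `y` can change their contribution: before `v` the left runs
agree, and from `y` on they are congruent. -/
theorem vA_insert_eq (hvy : v ≤ y)
    (hy : leftRun (insert v τ) y ≡ leftRun τ y [MOD d])
    (hv : ¬ d ∣ leftRun (insert v τ) v + 1)
    (hbetween : ∀ x, v ≤ x → x < y →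
      ¬ d ∣ leftRun (insert v τ) x + 1 ∧ ¬ d ∣ leftRun τ x + 1) :
    vA d (insert v τ) = vA d τ := by
  rw [vA, vA, Finset.filter_insert, if_neg hv]
  congr 1
  refine Finset.filter_congr fun x _ => ?_
  rcases lt_or_ge x v with hxv | hvx
  · rw [leftRun_congr fun z hz => Finset.mem_insert.trans (or_iff_right (hz.trans_lt hxv).ne)]
  rcases lt_or_ge x y with hxy | hyx
  · exact iff_of_false (hbetween x hvx hxy).1 (hbetween x hvx hxy).2
  · have hmod : leftRun (insert v τ) x ≡ leftRun τ x [MOD d] :=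
      leftRun_modEq_of_le
        (fun z hz => Finset.mem_insert.trans (or_iff_right (hvy.trans_lt hz).ne')) hy hyx
    exact (hmod.add_right 1).dvd_iff dvd_rfl

theorem vA_insert_of_Ioo_subset (hd : 2 ≤ d) (hu : u ∉ τ) (hud : u + d ∉ τ)
    (hrun : Finset.Ioo u (u + d) ⊆ τ) : vA d (insert (u + d) τ) = vA d τ := by
  have hleft : leftRun (insert (u + d) τ) (u + d) = d := by
    rw [leftRun_eq_sub (u := u) (by grind) (Nat.le_add_right u d), Nat.add_sub_cancel_left]
    rw [← Finset.Ioo_insert_right (by omega)]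
    exact Finset.insert_subset_insert _ hrun
  refine vA_insert_eq le_rfl ?_ ?_ fun x h h' => absurd h h'.not_ge
  · rw [hleft, leftRun_of_notMem hud]
    exact (Nat.modEq_zero_iff_dvd.2 dvd_rfl)
  · rw [hleft, Nat.dvd_add_right dvd_rfl, Nat.dvd_one]
    omega

theorem vA_insert_of_notMem_notMem (hu : u ∉ τ) (huv : u < v) (hvy : v < y) (hy : y ∉ τ)
    (hyu : y < u + d) : vA d (insert v τ) = vA d τ := by
  have hu' : u ∉ insert v τ := by simp [huv.ne, hu]
  have hy' : y ∉ insert v τ := by simp [hvy.ne', hy]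
  refine vA_insert_eq hvy.le ?_ (not_dvd_leftRun_add_one hu' huv.le (by omega))
    fun x hvx hxy => ⟨not_dvd_leftRun_add_one hu' (by omega) (by omega),
      not_dvd_leftRun_add_one hu (by omega) (by omega)⟩
  rw [leftRun_of_notMem hy, leftRun_of_notMem hy']

end Weight

section PivotRank

variable {ι : Type*} {P : Set (Finset ℕ)} {R : Finset ℕ → ι → Prop}
  {p : ι → ℕ} {σ τ : Finset ℕ} {a b : ι}

/-- The alternating paths `σs 0 ⊃ τs 1 ⊂ σs 1 ⊃ ⋯ ⊃ τs m ⊂ σs m` that occur in `IsAcyclic` and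
`OnlyTrivialAltPath`. -/
def IsAltPath (M : Set (Finset ℕ × Finset ℕ)) (m : ℕ) (σs τs : ℕ → Finset ℕ) : Prop :=
  ∀ i, 1 ≤ i → i ≤ m →
    (τs i, σs i) ∈ M ∧ τs i ⊆ σs (i - 1) ∧
    (σs (i - 1)).card = (τs i).card + 1 ∧ (τs i, σs (i - 1)) ∉ M

/-- The matching that pairs each ranked set not containing the pivot of its rank with the set
obtained by adding this pivot. -/
def pivotMatching (R : Finset ℕ → ι → Prop) (p : ι → ℕ) : Set (Finset ℕ × Finset ℕ) :=
  {q | ∃ τ a, R τ a ∧ p a ∉ τ ∧ q = (τ, insert (p a) τ)}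

theorem mk_mem_pivotMatching :
    (τ, σ) ∈ pivotMatching R p ↔ ∃ a, R τ a ∧ p a ∉ τ ∧ σ = insert (p a) τ := by
  simp only [pivotMatching, Set.mem_ofPred_eq, Prod.mk.injEq]
  grind

theorem isWeighted_pivotMatching {v : Finset ℕ → ℕ}
    (hv : ∀ {τ a}, R τ a → p a ∉ τ → v (insert (p a) τ) = v τ) :
    IsWeighted v (pivotMatching R p) := by
  rintro _ ⟨τ, a, ha, hpa, rfl⟩
  exact (hv ha hpa).symm

variable [PartialOrder ι]

/-- A partial monotone rank on the family `P`, each of whose fibres is closed under adding or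
removing one vertex: `R σ a` means that `σ ∈ P` has rank `a`, and `p a` is the pivot vertex of the
fibre over `a`. The rank is a relation because some elements of `P` (the critical ones) have
none. -/
structure IsPivotRank (P : Set (Finset ℕ)) (R : Finset ℕ → ι → Prop) (p : ι → ℕ) : Prop where
  mem : ∀ {σ a}, R σ a → σ ∈ P
  mono : ∀ {τ σ a b}, τ ⊆ σ → R τ a → R σ b → a ≤ b
  insert_iff : ∀ {τ a}, R (insert (p a) τ) a ↔ R τ a

namespace IsPivotRank

theorem rank_unique (hR : IsPivotRank P R p) (ha : R σ a) (hb : R σ b) : a = b :=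
  (hR.mono subset_rfl ha hb).antisymm (hR.mono subset_rfl hb ha)

theorem isMatching (hR : IsPivotRank P R p) : IsMatching P (pivotMatching R p) := by
  constructor
  · rintro _ ⟨τ, a, ha, hpa, rfl⟩
    exact ⟨hR.mem ha, hR.mem (hR.insert_iff.2 ha), Finset.subset_insert _ _,
      Finset.card_insert_of_notMem hpa⟩
  · rintro _ ⟨τ, a, ha, hpa, rfl⟩ _ ⟨τ', b, hb, hpb, rfl⟩ hne
    have ha' := hR.insert_iff.2 ha
    have hb' := hR.insert_iff.2 hb
    refine ⟨?_, ?_, ?_, ?_⟩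
    · rintro rfl
      obtain rfl := hR.rank_unique ha hb
      exact hne rfl
    · rintro rfl
      obtain rfl := hR.rank_unique ha hb'
      exact hpa (Finset.mem_insert_self _ _)
    · rintro rfl
      obtain rfl := hR.rank_unique ha' hb
      exact hpb (Finset.mem_insert_self _ _)
    · intro (heq : insert (p a) τ = insert (p b) τ')
      rw [heq] at ha'
      obtain rfl := hR.rank_unique ha' hb'
      obtain rfl : τ = τ' := by rw [← Finset.erase_insert hpa, heq, Finset.erase_insert hpb]
      exact hne rfl

theorem isCritical_iff (hR : IsPivotRank P R p) :
    IsCritical P (pivotMatching R p) σ ↔ σ ∈ P ∧ ∀ a, ¬ R σ a := by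
  refine and_congr_right fun _ => ⟨fun hσ a ha => ?_, ?_⟩
  · by_cases hpa : p a ∈ σ
    · have herase : R (σ.erase (p a)) a := hR.insert_iff.1 (by rwa [Finset.insert_erase hpa])
      exact (hσ (σ.erase (p a), σ) (mk_mem_pivotMatching.2
        ⟨a, herase, Finset.notMem_erase _ _, (Finset.insert_erase hpa).symm⟩)).2 rfl
    · exact (hσ (σ, insert (p a) σ) (mk_mem_pivotMatching.2 ⟨a, ha, hpa, rfl⟩)).1 rfl
  · rintro hσ _ ⟨τ, a, ha, -, rfl⟩
    exact ⟨fun h => hσ a (h ▸ ha), fun h => hσ a (h ▸ hR.insert_iff.2 ha)⟩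

theorem rank_lt_of_notMem_pivotMatching (hR : IsPivotRank P R p) (hσ : R σ b) (hpσ : p b ∈ σ)
    (hτ : R τ a) (hpτ : p a ∉ τ) (hsub : τ ⊆ σ) (hcard : σ.card = τ.card + 1)
    (hM : (τ, σ) ∉ pivotMatching R p) : a < b := by
  refine (hR.mono hsub hτ hσ).lt_of_ne ?_
  rintro rfl
  have hinsert : insert (p a) τ = σ :=
    Finset.eq_of_subset_of_card_le (Finset.insert_subset hpσ hsub)
      (by rw [Finset.card_insert_of_notMem hpτ, hcard])
  exact hM (mk_mem_pivotMatching.2 ⟨a, hτ, hpτ, hinsert.symm⟩)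

theorem rank_le_of_isAltPath (hR : IsPivotRank P R p) {m : ℕ} {σs τs : ℕ → Finset ℕ}
    (hpath : IsAltPath (pivotMatching R p) m σs τs) (hm : 1 ≤ m) (ha : R (τs 1) a)
    (hb : R (σs m) b) : b ≤ a := by
  induction m, hm using Nat.le_induction generalizing b with
  | base =>
    obtain ⟨c, hc, -, hσc⟩ := mk_mem_pivotMatching.1 (hpath 1 le_rfl le_rfl).1
    rw [hR.rank_unique ha hc, hR.rank_unique hb (hσc ▸ hR.insert_iff.2 hc)]
  | succ m hm ih =>
    obtain ⟨hmatch, hsub, -⟩ := hpath (m + 1) m.succ_pos le_rfl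
    obtain ⟨c, hc, -, hσc⟩ := mk_mem_pivotMatching.1 hmatch
    obtain ⟨c', hc', -, hσc'⟩ := mk_mem_pivotMatching.1 (hpath m hm m.le_succ).1
    have hσm : R (σs m) c' := hσc' ▸ hR.insert_iff.2 hc'
    calc b = c := hR.rank_unique hb (hσc ▸ hR.insert_iff.2 hc)
      _ ≤ c' := hR.mono hsub hc hσm
      _ ≤ a := ih (fun i hi him => hpath i hi (him.trans m.le_succ)) hσm

theorem isAcyclic (hR : IsPivotRank P R p) : IsAcyclic (pivotMatching R p) := by
  rintro ⟨m, σs, τs, hm, hcycle, hpath⟩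
  obtain ⟨hmatch, hsub, hcard, hM⟩ := hpath 1 le_rfl (by omega)
  obtain ⟨a, ha, hpa, -⟩ := mk_mem_pivotMatching.1 hmatch
  obtain ⟨b, hb, -, hσb⟩ := mk_mem_pivotMatching.1 (hpath m (by omega) le_rfl).1
  have hσm : R (σs m) b := hσb ▸ hR.insert_iff.2 hb
  rw [Nat.sub_self, ← hcycle] at hsub hcard hM
  have hlt : a < b := hR.rank_lt_of_notMem_pivotMatching hσm
    (hσb ▸ Finset.mem_insert_self _ _) ha hpa hsub hcard hM
  exact hlt.not_ge (hR.rank_le_of_isAltPath hpath (by omega) ha hσm)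

theorem onlyTrivialAltPath (hR : IsPivotRank P R p) {L : Set ι} (hL : IsLowerSet L)
    (hσ : ∀ {ρ a}, ρ ⊆ σ → R ρ a → a ∈ L) (hτ : ∀ {ρ a}, τ ⊆ ρ → R ρ a → a ∉ L) :
    OnlyTrivialAltPath (pivotMatching R p) σ τ := by
  rintro m σs τs rfl hpath hsub -
  by_contra hm
  have hm : 1 ≤ m := Nat.one_le_iff_ne_zero.2 hm
  obtain ⟨hmatch, hsub₁, -⟩ := hpath 1 le_rfl hm
  obtain ⟨a, ha, -⟩ := mk_mem_pivotMatching.1 hmatch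
  obtain ⟨b, hb, -, hσb⟩ := mk_mem_pivotMatching.1 (hpath m hm le_rfl).1
  have hσm : R (σs m) b := hσb ▸ hR.insert_iff.2 hb
  exact hτ hsub hσm (hL (hR.rank_le_of_isAltPath hpath hm ha hσm) (hσ hsub₁ ha))

end IsPivotRank

end PivotRank

section Knf

variable {d f n v : ℕ} {σ τ : Finset ℕ}

theorem insert_mem_Knf_iff (hfv : f < v) (hvn : v ≤ n) : insert v τ ∈ Knf n f ↔ τ ∈ Knf n f := by
  have hv : v ∉ Finset.Icc 1 f := fun h => hfv.not_ge (Finset.mem_Icc.1 h).2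
  refine and_congr ?_ (Finset.subset_insert_iff_of_notMem hv)
  rw [Finset.insert_subset_iff, and_iff_right (Finset.mem_Icc.2 ⟨by omega, hvn⟩)]

theorem Knf_self (n : ℕ) : Knf n n = {Finset.Icc 1 n} := by
  ext σ
  exact Finset.Subset.antisymm_iff.symm

theorem isCritical_Knf_self_iff {ι : Type*} [PartialOrder ι] {R : Finset ℕ → ι → Prop} {p : ι → ℕ}
    (hR : IsPivotRank (Knf n n) R p) (hrank : ∀ a, ¬ R σ a) :
    IsCritical (Knf n n) (pivotMatching R p) σ ↔ σ = Finset.Icc 1 n := by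
  rw [hR.isCritical_iff, and_iff_left hrank, Knf_self, Set.mem_singleton_iff]

/-- The one-valued rank whose matching toggles the single vertex `v`; it is empty when `v` is not
available. -/
def ConeRank (n f v : ℕ) (σ : Finset ℕ) (_ : Unit) : Prop :=
  σ ∈ Knf n f ∧ v ≤ n

theorem isPivotRank_coneRank (hfv : f < v) :
    IsPivotRank (Knf n f) (ConeRank n f v) fun _ => v where
  mem h := h.1
  mono _ _ _ := le_rfl
  insert_iff := and_congr_left fun hvn => insert_mem_Knf_iff hfv hvn

theorem ConeRank.vA_insert (hd : 2 ≤ d) (hτ : ConeRank n (d - 1) d τ ()) (hdτ : d ∉ τ) :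
    vA d (insert d τ) = vA d τ := by
  rw [← zero_add d] at hdτ
  have h₀ : 0 ∉ τ := fun h => (Finset.mem_Icc.1 (hτ.1.1 h)).1.not_gt Nat.one_pos
  have hrun : Finset.Ioo 0 (0 + d) ⊆ τ := fun y hy => hτ.1.2 (by grind)
  simpa only [zero_add] using vA_insert_of_Ioo_subset hd h₀ hdτ hrun

end Knf

section Walls

open Sum OrderDual

variable {w : ℕ → ℕ} {σ τ : Finset ℕ} {i j v y d : ℕ}

/-- Below the `j`-th wall, the elements of `σ` are exactly the numbers that are not walls. -/
def AgreesBelow (w : ℕ → ℕ) (j : ℕ) (σ : Finset ℕ) : Prop :=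
  ∀ y < w j, (y ∈ σ ↔ y ∉ Set.range w)

/-- Up to the `j`-th wall, `σ` agrees with the complement of the walls, but it misses a number
strictly between this wall and the next one. Whether `w j ∈ σ` is left open. -/
def IsDeficient (w : ℕ → ℕ) (j : ℕ) (σ : Finset ℕ) : Prop :=
  AgreesBelow w j σ ∧ ∃ y, w j < y ∧ y < w (j + 1) ∧ y ∉ σ

/-- The first departure of `σ` from the complement of the walls is that it contains the `j`-th
wall, and it also contains every number strictly between this wall and the next one. Whether
`w (j + 1) ∈ σ` is left open. -/
def IsSaturated (w : ℕ → ℕ) (j : ℕ) (σ : Finset ℕ) : Prop :=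
  AgreesBelow w j σ ∧ w j ∈ σ ∧ ∀ y, w j < y → y < w (j + 1) → y ∈ σ

/-- The position of the first departure of `σ` from the complement of the walls, ordered so as to
be monotone under inclusion: first the deficient positions in increasing order, then the saturated
ones in decreasing order. -/
inductive HasDefect (w : ℕ → ℕ) (σ : Finset ℕ) : ℕ ⊕ₗ ℕᵒᵈ → Prop
  | deficient {j : ℕ} (h : IsDeficient w j σ) : HasDefect w σ (inlₗ j)
  | saturated {j : ℕ} (h : IsSaturated w j σ) : HasDefect w σ (inrₗ (toDual j))

/-- The wall whose presence in `σ` does not affect a defect of `σ` at the given position. -/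
def pivot (w : ℕ → ℕ) : ℕ ⊕ₗ ℕᵒᵈ → ℕ
  | inlₗ j => w j
  | inrₗ j => w (ofDual j + 1)

theorem AgreesBelow.wall_notMem (hσ : AgreesBelow w j σ) (hw : StrictMono w) (hij : i < j) :
    w i ∉ σ :=
  fun h => (hσ _ (hw hij)).1 h ⟨i, rfl⟩

theorem AgreesBelow.mem_of_lt_of_lt (hσ : AgreesBelow w j σ) (hw : StrictMono w) (hij : i < j)
    (hiy : w i < y) (hyi : y < w (i + 1)) : y ∈ σ :=
  (hσ y (hyi.trans_le (hw.monotone hij))).2 (notMem_range_of_lt_of_lt hw hiy hyi)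

theorem agreesBelow_insert_iff (hv : w j ≤ v) :
    AgreesBelow w j (insert v σ) ↔ AgreesBelow w j σ :=
  forall₂_congr fun _ hy => by rw [Finset.mem_insert, or_iff_right (hy.trans_le hv).ne]

theorem isDeficient_insert_iff : IsDeficient w j (insert (w j) σ) ↔ IsDeficient w j σ := by
  refine and_congr (agreesBelow_insert_iff le_rfl)
    (exists_congr fun y => and_congr_right fun hy => ?_)
  rw [Finset.mem_insert, or_iff_right hy.ne']

theorem isSaturated_insert_iff (hw : StrictMono w) :
    IsSaturated w j (insert (w (j + 1)) σ) ↔ IsSaturated w j σ := by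
  have hj : w j < w (j + 1) := hw j.lt_succ_self
  refine and_congr (agreesBelow_insert_iff hj.le) (and_congr ?_ (forall₃_congr fun y _ hy => ?_))
  · rw [Finset.mem_insert, or_iff_right hj.ne]
  · rw [Finset.mem_insert, or_iff_right hy.ne]

theorem hasDefect_insert_pivot_iff (hw : StrictMono w) {a : ℕ ⊕ₗ ℕᵒᵈ} :
    HasDefect w (insert (pivot w a) σ) a ↔ HasDefect w σ a := by
  constructor
  · rintro (h | h)
    exacts [.deficient (isDeficient_insert_iff.1 h), .saturated ((isSaturated_insert_iff hw).1 h)]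
  · rintro (h | h)
    exacts [.deficient (isDeficient_insert_iff.2 h), .saturated ((isSaturated_insert_iff hw).2 h)]

theorem IsDeficient.le_of_subset (hτ : IsDeficient w i τ) (hσ : IsDeficient w j σ)
    (hw : StrictMono w) (hsub : τ ⊆ σ) : i ≤ j := by
  obtain ⟨-, y, hjy, hyj, hy⟩ := hσ
  exact not_lt.1 fun hji => hy (hsub (hτ.1.mem_of_lt_of_lt hw hji hjy hyj))

theorem IsSaturated.le_of_subset (hτ : IsSaturated w i τ) (hσ : IsSaturated w j σ)
    (hw : StrictMono w) (hsub : τ ⊆ σ) : j ≤ i :=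
  not_lt.1 fun hij => hσ.1.wall_notMem hw hij (hsub hτ.2.1)

theorem IsSaturated.not_isDeficient_of_subset (hτ : IsSaturated w i τ) (hw : StrictMono w)
    (hsub : τ ⊆ σ) : ¬ IsDeficient w j σ := by
  rintro ⟨hσ, y, hjy, hyj, hy⟩
  rcases lt_trichotomy j i with hji | rfl | hij
  · exact hy (hsub (hτ.1.mem_of_lt_of_lt hw hji hjy hyj))
  · exact hy (hsub (hτ.2.2 y hjy hyj))
  · exact hσ.wall_notMem hw hij (hsub hτ.2.1)

theorem HasDefect.le_of_subset {a b : ℕ ⊕ₗ ℕᵒᵈ} (hτ : HasDefect w τ a) (hσ : HasDefect w σ b)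
    (hw : StrictMono w) (hsub : τ ⊆ σ) : a ≤ b := by
  rcases hτ with hτ | hτ <;> rcases hσ with hσ | hσ
  · exact Lex.inl_le_inl_iff.2 (hτ.le_of_subset hσ hw hsub)
  · exact Lex.inl_le_inr _ _
  · exact absurd hσ (hτ.not_isDeficient_of_subset hw hsub)
  · exact Lex.inr_le_inr_iff.2 (toDual_le_toDual.2 (hτ.le_of_subset hσ hw hsub))

theorem AgreesBelow.succ_of_notMem (hσ : AgreesBelow w j σ) (hw : StrictMono w) (hj : w j ∉ σ)
    (hmem : ∀ y, w j < y → y < w (j + 1) → y ∈ σ) : AgreesBelow w (j + 1) σ := by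
  intro y hy
  rcases lt_trichotomy y (w j) with hyj | rfl | hjy
  · exact hσ y hyj
  · exact iff_of_false hj (not_not.2 ⟨j, rfl⟩)
  · exact iff_of_true (hmem y hjy hy) (notMem_range_of_lt_of_lt hw hjy hy)

theorem AgreesBelow.isDeficient_or_isSaturated_or_succ (hσ : AgreesBelow w j σ)
    (hw : StrictMono w) : IsDeficient w j σ ∨ IsSaturated w j σ ∨ AgreesBelow w (j + 1) σ := by
  by_cases hmem : ∀ y, w j < y → y < w (j + 1) → y ∈ σ
  · by_cases hj : w j ∈ σ
    · exact .inr (.inl ⟨hσ, hj, hmem⟩)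
    · exact .inr (.inr (hσ.succ_of_notMem hw hj hmem))
  · push Not at hmem
    exact .inl ⟨hσ, hmem⟩

theorem IsSaturated.agreesBelow_erase (hσ : IsSaturated w j σ) (hw : StrictMono w) :
    AgreesBelow w (j + 1) (σ.erase (w j)) := by
  have hbelow : AgreesBelow w j (σ.erase (w j)) :=
    (agreesBelow_insert_iff le_rfl).1 (by rw [Finset.insert_erase hσ.2.1]; exact hσ.1)
  exact hbelow.succ_of_notMem hw (Finset.notMem_erase _ _)
    fun y hjy hyj => Finset.mem_erase.2 ⟨hjy.ne', hσ.2.2 y hjy hyj⟩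

theorem IsDeficient.vA_insert_eq (hτ : IsDeficient w (j + 1) τ) (hw : StrictMono w)
    (hd : w (j + 2) ≤ w j + d) : vA d (insert (w (j + 1)) τ) = vA d τ := by
  obtain ⟨hbelow, y, hjy, hyj, hy⟩ := hτ
  exact vA_insert_of_notMem_notMem (hbelow.wall_notMem hw j.lt_succ_self) (hw j.lt_succ_self) hjy hy
    (hyj.trans_le hd)

theorem IsSaturated.vA_insert_eq (hτ : IsSaturated w (j + 1) τ) (hw : StrictMono w)
    (hd : w (j + 2) = w j + d) (hpivot : w (j + 2) ∉ τ) :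
    vA d (insert (w (j + 2)) τ) = vA d τ := by
  have h₁ : w j < w (j + 1) := hw j.lt_succ_self
  have h₂ : w (j + 1) < w (j + 2) := hw (j + 1).lt_succ_self
  rw [hd] at h₂ hpivot ⊢
  refine vA_insert_of_Ioo_subset (by omega) (hτ.1.wall_notMem hw j.lt_succ_self) hpivot
    fun y hy => ?_
  obtain ⟨hjy, hyj⟩ := Finset.mem_Ioo.1 hy
  rcases lt_trichotomy y (w (j + 1)) with hlt | rfl | hgt
  · exact hτ.1.mem_of_lt_of_lt hw j.lt_succ_self hjy hlt
  · exact hτ.2.1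
  · exact hτ.2.2 y hgt (hd ▸ hyj)

end Walls

section ModularWalls

variable {d f n m k v j : ℕ} {σ τ : Finset ℕ}

/-- The numbers congruent to `0` or `f + 1` modulo `d`, in increasing order (for `f + 1 < d`):
`0, f + 1, d, d + f + 1, 2d, …`. -/
def wall (d f : ℕ) : ℕ → ℕ
  | 0 => 0
  | 1 => f + 1
  | j + 2 => wall d f j + d

theorem wall_strictMono (hf : f + 1 < d) : StrictMono (wall d f) := by
  have hsteps (j : ℕ) : wall d f j < wall d f (j + 1) ∧ wall d f (j + 1) < wall d f j + d := by
    induction j with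
    | zero => exact ⟨f.succ_pos, by simpa only [wall, zero_add] using hf⟩
    | succ j ih => exact ⟨ih.2, Nat.add_lt_add_right ih.1 d⟩
  exact strictMono_nat_of_lt_succ fun j => (hsteps j).1

theorem wall_two_mul (d f k : ℕ) : wall d f (2 * k) = k * d := by
  induction k with
  | zero => simp [wall]
  | succ k ih => rw [Nat.mul_succ, wall, ih, Nat.succ_mul]

theorem wall_two_mul_add_one (d f k : ℕ) : wall d f (2 * k + 1) = k * d + f + 1 := by
  induction k with
  | zero => simp [wall]
  | succ k ih => rw [Nat.mul_succ, add_right_comm, wall, ih, Nat.succ_mul]; omega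

theorem mem_range_wall (hf : f + 1 < d) {y : ℕ} :
    y ∈ Set.range (wall d f) ↔ y % d = 0 ∨ y % d = f + 1 := by
  constructor
  · rintro ⟨j, rfl⟩
    obtain ⟨k, rfl | rfl⟩ := j.even_or_odd'
    · exact .inl (by rw [wall_two_mul, Nat.mul_mod_left])
    · exact .inr (by rw [wall_two_mul_add_one, add_assoc, Nat.mul_add_mod_of_lt hf])
  · have hy := Nat.div_add_mod' y d
    rintro (h | h)
    · exact ⟨2 * (y / d), by rw [wall_two_mul]; omega⟩
    · exact ⟨2 * (y / d) + 1, by rw [wall_two_mul_add_one]; omega⟩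

theorem mem_tau0_iff_notMem_range_wall (hf : f + 1 < d) {y : ℕ} :
    y ∈ tau0 d f n ↔ y ≤ n ∧ y ∉ Set.range (wall d f) := by
  rw [mem_range_wall hf, tau0, Finset.mem_filter, Finset.mem_Icc]
  rcases y.eq_zero_or_pos with rfl | hy
  · simp
  · simp [Nat.one_le_iff_ne_zero, hy.ne']

theorem vA_tau0 (hf : f + 1 < d) : vA d (tau0 d f n) = 0 := by
  refine Finset.card_eq_zero.2 (Finset.filter_eq_empty_iff.2 fun x _ => ?_)
  obtain ⟨j, hjx, hxj⟩ := exists_le_lt_succ_of_strictMono (wall_strictMono hf) rfl x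
  have hj : wall d f (j + 1) < wall d f j + d := wall_strictMono hf (j + 1).lt_succ_self
  exact not_dvd_leftRun_add_one (fun h => ((mem_tau0_iff_notMem_range_wall hf).1 h).2 ⟨j, rfl⟩)
    hjx (by omega)

theorem wall_mem_insert_wall_tau0_iff (hf : f + 1 < d) :
    wall d f j ∈ insert (wall d f m) (tau0 d f n) ↔ j = m := by
  rw [Finset.mem_insert, mem_tau0_iff_notMem_range_wall hf, (wall_strictMono hf).injective.eq_iff,
    or_iff_left (fun h => h.2 ⟨j, rfl⟩)]

theorem Ioc_wall_subset_insert_wall_tau0 (hf : f + 1 < d) (hn : n < wall d f (m + 2)) :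
    Finset.Ioc (wall d f m) n ⊆ insert (wall d f (m + 1)) (tau0 d f n) := by
  intro y hy
  rw [Finset.mem_Ioc] at hy
  rw [Finset.mem_insert, mem_tau0_iff_notMem_range_wall hf]
  rcases lt_trichotomy y (wall d f (m + 1)) with hlt | heq | hgt
  · exact .inr ⟨hy.2, notMem_range_of_lt_of_lt (wall_strictMono hf) hy.1 hlt⟩
  · exact .inl heq
  · exact .inr ⟨hy.2, notMem_range_of_lt_of_lt (wall_strictMono hf) hgt (hy.2.trans_lt hn)⟩

theorem vA_insert_wall_tau0 (hf : f + 1 < d) (hn : n + 1 = wall d f (m + 2)) :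
    vA d (insert (wall d f (m + 1)) (tau0 d f n)) = 1 := by
  have hw := wall_strictMono hf
  have hm₁ : wall d f m < wall d f (m + 1) := hw m.lt_succ_self
  have hm₂ : wall d f (m + 1) < wall d f (m + 2) := hw (m + 1).lt_succ_self
  have hm : wall d f m ∉ insert (wall d f (m + 1)) (tau0 d f n) :=
    mt (wall_mem_insert_wall_tau0_iff hf).1 m.lt_succ_self.ne
  have hrun : Finset.Ioc (wall d f m) n ⊆ insert (wall d f (m + 1)) (tau0 d f n) :=
    Ioc_wall_subset_insert_wall_tau0 hf (by omega)
  refine Finset.card_eq_one.2 ⟨n, Finset.eq_singleton_iff_unique_mem.2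
    ⟨Finset.mem_filter.2 ⟨hrun (Finset.mem_Ioc.2 ⟨by omega, le_rfl⟩), ?_⟩, fun x hx => ?_⟩⟩
  · rw [leftRun_eq_sub hm (by omega) hrun]
    exact ⟨1, by rw [wall] at hn; omega⟩
  · obtain ⟨hxσ, hdvd⟩ := Finset.mem_filter.1 hx
    have hxn : x ≤ n := by
      rcases Finset.mem_insert.1 hxσ with rfl | hx
      exacts [by omega, ((mem_tau0_iff_notMem_range_wall hf).1 hx).1]
    by_contra hne
    obtain ⟨j, hjx, hxj⟩ := exists_le_lt_succ_of_strictMono hw rfl x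
    rcases eq_or_ne j (m + 1) with rfl | hj
    · exact not_dvd_leftRun_add_one hm (hm₁.le.trans hjx) (by rw [wall] at hn; omega) hdvd
    · have hj₂ : wall d f (j + 1) < wall d f j + d := hw (j + 1).lt_succ_self
      exact not_dvd_leftRun_add_one (mt (wall_mem_insert_wall_tau0_iff hf).1 hj) hjx (by omega)
        hdvd

theorem not_isDeficient_zero_of_mem_Knf (hσ : σ ∈ Knf n f) : ¬ IsDeficient (wall d f) 0 σ := by
  rintro ⟨-, y, hy, hyf, hyσ⟩
  exact hyσ (hσ.2 (Finset.mem_Icc.2 ⟨hy, Nat.le_of_lt_succ hyf⟩))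

theorem not_isSaturated_zero_of_mem_Knf (hσ : σ ∈ Knf n f) : ¬ IsSaturated (wall d f) 0 σ :=
  fun h => (Finset.mem_Icc.1 (hσ.1 h.2.1)).1.not_gt Nat.one_pos

/-- The rank of `σ ∈ Knf n f` is the position of its first departure from the complement of the
walls, provided that the corresponding pivot lies in `{1, …, n}`. -/
def WallRank (d f n : ℕ) (σ : Finset ℕ) (a : ℕ ⊕ₗ ℕᵒᵈ) : Prop :=
  σ ∈ Knf n f ∧ HasDefect (wall d f) σ a ∧ pivot (wall d f) a ≤ n

/-- The matching on `Knf n f` that toggles the pivot of the first departure from the complement of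
the walls. -/
abbrev wallMatching (d f n : ℕ) : Set (Finset ℕ × Finset ℕ) :=
  pivotMatching (WallRank d f n) (pivot (wall d f))

theorem lt_pivot_of_hasDefect (hf : f + 1 < d) (hσ : σ ∈ Knf n f) {a : ℕ ⊕ₗ ℕᵒᵈ}
    (ha : HasDefect (wall d f) σ a) : f < pivot (wall d f) a := by
  have hwall {j : ℕ} : f < wall d f (j + 1) :=
    (wall_strictMono hf).monotone (Nat.le_add_left 1 j)
  rcases ha with @⟨_ | j, h⟩ | h
  exacts [absurd h (not_isDeficient_zero_of_mem_Knf hσ), hwall, hwall]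

theorem not_wallRank_self (hf : n + 1 < d) (a : ℕ ⊕ₗ ℕᵒᵈ) : ¬ WallRank d n n σ a :=
  fun ⟨hσ, ha, han⟩ => (lt_pivot_of_hasDefect hf hσ ha).not_ge han

theorem isPivotRank_wallRank (hf : f + 1 < d) :
    IsPivotRank (Knf n f) (WallRank d f n) (pivot (wall d f)) where
  mem h := h.1
  mono hsub hτ hσ := hτ.2.1.le_of_subset hσ.2.1 (wall_strictMono hf) hsub
  insert_iff {τ a} := by
    have hdefect : HasDefect (wall d f) (insert (pivot (wall d f) a) τ) a ↔
        HasDefect (wall d f) τ a := hasDefect_insert_pivot_iff (wall_strictMono hf)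
    constructor
    · rintro ⟨hmem, ha, han⟩
      exact ⟨(insert_mem_Knf_iff (lt_pivot_of_hasDefect hf hmem ha) han).1 hmem, hdefect.1 ha, han⟩
    · rintro ⟨hmem, ha, han⟩
      exact ⟨(insert_mem_Knf_iff (lt_pivot_of_hasDefect hf hmem ha) han).2 hmem, hdefect.2 ha, han⟩

theorem WallRank.vA_insert_pivot (hf : f + 1 < d) {a : ℕ ⊕ₗ ℕᵒᵈ} (ha : WallRank d f n τ a)
    (hpivot : pivot (wall d f) a ∉ τ) : vA d (insert (pivot (wall d f) a) τ) = vA d τ := by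
  obtain ⟨hτ, @⟨_ | j, h⟩ | @⟨_ | j, h⟩, -⟩ := ha
  · exact absurd h (not_isDeficient_zero_of_mem_Knf hτ)
  · exact h.vA_insert_eq (wall_strictMono hf) le_rfl
  · exact absurd h (not_isSaturated_zero_of_mem_Knf hτ)
  · exact h.vA_insert_eq (wall_strictMono hf) rfl hpivot

theorem pivot_mod_eq (hf : f + 1 < d) (a : ℕ ⊕ₗ ℕᵒᵈ) :
    pivot (wall d f) a % d = (f + 1) % d ∨ pivot (wall d f) a % d = 0 := by
  rw [Nat.mod_eq_of_lt hf, or_comm, ← mem_range_wall hf]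
  rcases a with j | j
  exacts [⟨j, rfl⟩, ⟨_, rfl⟩]

theorem agreesBelow_of_forall_not_wallRank (hf : f + 1 < d) (hσ : σ ∈ Knf n f)
    (hrank : ∀ a, ¬ WallRank d f n σ a) (hj : wall d f j ≤ n) : AgreesBelow (wall d f) j σ := by
  have hw := wall_strictMono hf
  induction j with
  | zero => exact fun y hy => absurd hy y.not_lt_zero
  | succ j ih =>
    have hjn : wall d f j ≤ n := (hw j.lt_succ_self).le.trans hj
    rcases (ih hjn).isDeficient_or_isSaturated_or_succ hw with h | h | h
    exacts [absurd ⟨hσ, .deficient h, hjn⟩ (hrank _), absurd ⟨hσ, .saturated h, hj⟩ (hrank _), h]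

theorem eq_tau0_of_agreesBelow (hf : f + 1 < d) (hσ : ∀ y ∈ σ, y ≤ n) (hn : n < wall d f j)
    (h : AgreesBelow (wall d f) j σ) : σ = tau0 d f n := by
  ext y
  rw [mem_tau0_iff_notMem_range_wall hf]
  by_cases hy : y ≤ n
  · rw [and_iff_right hy, h y (hy.trans_lt hn)]
  · exact iff_of_false (mt (hσ y) hy) (mt And.left hy)

theorem eq_insert_tau0_of_isSaturated (hf : f + 1 < d) (hσ : ∀ y ∈ σ, y ≤ n)
    (hn : n < wall d f (j + 1)) (h : IsSaturated (wall d f) j σ) :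
    σ = insert (wall d f j) (tau0 d f n) := by
  rw [← eq_tau0_of_agreesBelow hf (fun y hy => hσ y (Finset.mem_of_mem_erase hy)) hn
    (h.agreesBelow_erase (wall_strictMono hf)), Finset.insert_erase h.2.1]

theorem eq_tau0_or_eq_insert_tau0 (hf : f + 1 < d) (hfn : f < n) (hσ : σ ∈ Knf n f)
    (hrank : ∀ a, ¬ WallRank d f n σ a) :
    ∃ m, n + 1 = wall d f (m + 2) ∧
      (σ = tau0 d f n ∨ σ = insert (wall d f (m + 1)) (tau0 d f n)) := by
  have hw := wall_strictMono hf
  have hσn (y) (hy : y ∈ σ) : y ≤ n := (Finset.mem_Icc.1 (hσ.1 hy)).2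
  obtain ⟨j, hjn, hnj⟩ := exists_le_lt_succ_of_strictMono hw rfl n
  obtain _ | m := j
  · exact absurd hnj (Nat.succ_le_of_lt hfn).not_gt
  refine ⟨m, ?_⟩
  have hbelow := agreesBelow_of_forall_not_wallRank hf hσ hrank hjn
  have hnotDeficient : ¬ IsDeficient (wall d f) (m + 1) σ :=
    fun h => hrank _ ⟨hσ, .deficient h, hjn⟩
  constructor
  · refine (Nat.succ_le_of_lt hnj).antisymm (not_lt.1 fun hlt => hnotDeficient ?_)
    exact ⟨hbelow, n + 1, Nat.lt_succ_of_le hjn, hlt, fun h => n.not_succ_le_self (hσn _ h)⟩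
  · rcases hbelow.isDeficient_or_isSaturated_or_succ hw with h | h | h
    exacts [absurd h hnotDeficient, .inr (eq_insert_tau0_of_isSaturated hf hσn hnj h),
      .inl (eq_tau0_of_agreesBelow hf hσn hnj h)]

theorem WallRank.mem_range_inlₗ (hf : f + 1 < d) {a : ℕ ⊕ₗ ℕᵒᵈ} (ha : WallRank d f n σ a)
    (hn : n + 1 = wall d f (m + 1)) (hσ : σ ⊆ insert (wall d f m) (tau0 d f n)) :
    a ∈ Set.range Sum.inlₗ := by
  obtain ⟨-, h | ⟨-, hjσ, -⟩, hpivot⟩ := ha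
  · exact ⟨_, rfl⟩
  · obtain rfl := (wall_mem_insert_wall_tau0_iff hf).1 (hσ hjσ)
    exact absurd hpivot (Nat.lt_of_succ_le hn.le).not_ge

theorem WallRank.notMem_range_inlₗ (hf : f + 1 < d) {a : ℕ ⊕ₗ ℕᵒᵈ} (ha : WallRank d f n σ a)
    (hn : n + 1 = wall d f (m + 1)) (hσ : tau0 d f n ⊆ σ) : a ∉ Set.range Sum.inlₗ := by
  have hw := wall_strictMono hf
  rintro ⟨j, rfl⟩
  obtain ⟨-, ⟨-, y, hjy, hyj, hy⟩, (hpivot : wall d f j ≤ n)⟩ := ha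
  have hjm : j < m + 1 := hw.lt_iff_lt.1 (by omega)
  have hyn : y < n + 1 := hn ▸ hyj.trans_le (hw.monotone hjm)
  exact hy (hσ ((mem_tau0_iff_notMem_range_wall hf).2
    ⟨Nat.lt_succ_iff.1 hyn, notMem_range_of_lt_of_lt hw hjy hyj⟩))

theorem tau0_mem_Knf (hf : f + 1 < d) (hfn : f ≤ n) : tau0 d f n ∈ Knf n f := by
  refine ⟨Finset.filter_subset _ _, fun y hy => ?_⟩
  obtain ⟨hy₁, hyf⟩ := Finset.mem_Icc.1 hy
  exact Finset.mem_filter.2 ⟨Finset.mem_Icc.2 ⟨hy₁, hyf.trans hfn⟩,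
    by rw [Nat.mod_eq_of_lt (by omega)]; omega⟩

theorem isCritical_iff_eq_tau0_or_eq_insert_tau0 (hf : f + 1 < d) (hn : n + 1 = wall d f (m + 2)) :
    IsCritical (Knf n f) (wallMatching d f n) σ ↔
      σ = tau0 d f n ∨ σ = insert (wall d f (m + 1)) (tau0 d f n) := by
  have hw := wall_strictMono hf
  have hfm : f < wall d f (m + 1) := hw.monotone (Nat.le_add_left 1 m)
  have hmn : wall d f (m + 1) < n + 1 := hn ▸ hw (m + 1).lt_succ_self
  have htau : tau0 d f n ∈ Knf n f := tau0_mem_Knf hf (by omega)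
  rw [(isPivotRank_wallRank hf).isCritical_iff]
  constructor
  · rintro ⟨hσ, hrank⟩
    obtain ⟨m', hm', h⟩ := eq_tau0_or_eq_insert_tau0 hf (by omega) hσ hrank
    obtain rfl : m = m' := Nat.add_right_cancel (hw.injective (hn.symm.trans hm'))
    exact h
  · have hunranked {σ} (hle : tau0 d f n ⊆ σ) (hge : σ ⊆ insert (wall d f (m + 1)) (tau0 d f n))
        (a) : ¬ WallRank d f n σ a := fun ha =>
      ha.notMem_range_inlₗ hf hn hle (ha.mem_range_inlₗ hf hn hge)
    rintro (rfl | rfl)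
    · exact ⟨htau, hunranked subset_rfl (Finset.subset_insert _ _)⟩
    · exact ⟨(insert_mem_Knf_iff hfm (by omega)).2 htau,
        hunranked (Finset.subset_insert _ _) subset_rfl⟩

theorem onlyTrivialAltPath_insert_tau0 (hf : f + 1 < d) (hn : n + 1 = wall d f (m + 2)) :
    OnlyTrivialAltPath (wallMatching d f n)
      (insert (wall d f (m + 1)) (tau0 d f n)) (tau0 d f n) :=
  (isPivotRank_wallRank hf).onlyTrivialAltPath isLowerSet_range_inlₗ
    (fun hρ ha => ha.mem_range_inlₗ hf hn hρ)
    (fun hρ ha => ha.notMem_range_inlₗ hf hn hρ)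

/-- The critical elements of `M` are exactly `τ` and `σ`, of weights `0` and `1`, and are joined by
the trivial alternating path only. -/
def IsCriticalPair (P : Set (Finset ℕ)) (M : Set (Finset ℕ × Finset ℕ)) (v : Finset ℕ → ℕ)
    (τ σ : Finset ℕ) : Prop :=
  (∀ ρ, IsCritical P M ρ ↔ ρ = τ ∨ ρ = σ) ∧ v τ = 0 ∧ v σ = 1 ∧ OnlyTrivialAltPath M σ τ

theorem isCriticalPair_insert_wall (hf : f + 1 < d) (hn : n + 1 = wall d f (m + 2)) :
    IsCriticalPair (Knf n f) (wallMatching d f n) (vA d) (tau0 d f n)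
      (insert (wall d f (m + 1)) (tau0 d f n)) :=
  ⟨fun _ => isCritical_iff_eq_tau0_or_eq_insert_tau0 hf hn, vA_tau0 hf, vA_insert_wall_tau0 hf hn,
    onlyTrivialAltPath_insert_tau0 hf hn⟩

theorem isCriticalPair_of_eq_mul_add (hf : f + 1 < d) (hk : 1 ≤ k) (hn : n = k * d + f) :
    IsCriticalPair (Knf n f) (wallMatching d f n) (vA d) (tau0 d f n)
      (insert (k * d) (tau0 d f n)) := by
  obtain ⟨k, rfl⟩ := Nat.exists_eq_add_of_le' hk
  rw [← wall_two_mul d f (k + 1)]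
  exact isCriticalPair_insert_wall hf (hn ▸ (wall_two_mul_add_one d f (k + 1)).symm)

theorem isCriticalPair_of_add_one_eq_mul (hf : f + 1 < d) (hk : 1 ≤ k) (hn : n + 1 = k * d) :
    IsCriticalPair (Knf n f) (wallMatching d f n) (vA d) (tau0 d f n)
      (insert ((k - 1) * d + f + 1) (tau0 d f n)) := by
  obtain ⟨k, rfl⟩ := Nat.exists_eq_add_of_le' hk
  rw [Nat.add_sub_cancel, ← wall_two_mul_add_one d f k]
  exact isCriticalPair_insert_wall hf (hn ▸ (wall_two_mul d f (k + 1)).symm)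

theorem exists_eq_mul_of_isCritical (hf : f + 1 < d) (hfn : f < n)
    (hσ : IsCritical (Knf n f) (wallMatching d f n) σ) :
    (∃ k, 1 ≤ k ∧ n = k * d + f) ∨ ∃ k, 1 ≤ k ∧ n + 1 = k * d := by
  obtain ⟨hσ, hrank⟩ := (isPivotRank_wallRank hf).isCritical_iff.1 hσ
  obtain ⟨m, hm, -⟩ := eq_tau0_or_eq_insert_tau0 hf hfn hσ hrank
  obtain ⟨k, rfl | rfl⟩ := m.even_or_odd'
  · exact .inr ⟨k + 1, k.succ_pos, hm.trans (wall_two_mul d f (k + 1))⟩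
  · have hn : n + 1 = (k + 1) * d + f + 1 := hm.trans (wall_two_mul_add_one d f (k + 1))
    exact .inl ⟨k + 1, k.succ_pos, Nat.succ.inj hn⟩

end ModularWalls

/--
The precise matching on `K_{n,f}` for the type-`A` weight `v_d` (Theorem
`thm:matching-An` of the paper): an acyclic weighted matching, all of whose
matched pairs add/remove a vertex `v ≡ f+1` or `v ≡ 0 (mod d)`, with
critical cells described explicitly in each case, perfect otherwise, and such
that when there are two critical cells the only alternating path between them
is the trivial one.
-/
theorem exists_precise_matching_Knf (d f n : ℕ) (hd : 2 ≤ d) (hf : f ≤ d - 1)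
    (hn : f ≤ n) :
    ∃ M : Set (Finset ℕ × Finset ℕ),
      IsMatching (Knf n f) M ∧
      IsAcyclic M ∧
      IsWeighted (vA d) M ∧
      (∀ p ∈ M, ∃ v : ℕ, v ∉ p.1 ∧ p.2 = insert v p.1 ∧
        (v % d = (f + 1) % d ∨ v % d = 0)) ∧
      -- (i) `n = f`: the unique critical element is `{1, …, f}`
      (n = f → ∀ σ : Finset ℕ,
        (IsCritical (Knf n f) M σ ↔ σ = Finset.Icc 1 f)) ∧
      -- (ii) `f ≤ d - 2`, `n = kd + f` with `k ≥ 1`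
      (∀ k : ℕ, 1 ≤ k → f ≤ d - 2 → n = k * d + f →
        (∀ σ : Finset ℕ,
          (IsCritical (Knf n f) M σ ↔
            (σ = tau0 d f n ∨ σ = insert (k * d) (tau0 d f n)))) ∧
        vA d (tau0 d f n) = 0 ∧
        vA d (insert (k * d) (tau0 d f n)) = 1 ∧
        OnlyTrivialAltPath M (insert (k * d) (tau0 d f n)) (tau0 d f n)) ∧
      -- (iii) `f ≤ d - 2`, `n = kd - 1` with `k ≥ 1`
      (∀ k : ℕ, 1 ≤ k → f ≤ d - 2 → n + 1 = k * d →
        (∀ σ : Finset ℕ,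
          (IsCritical (Knf n f) M σ ↔
            (σ = tau0 d f n ∨ σ = insert ((k - 1) * d + f + 1) (tau0 d f n)))) ∧
        vA d (tau0 d f n) = 0 ∧
        vA d (insert ((k - 1) * d + f + 1) (tau0 d f n)) = 1 ∧
        OnlyTrivialAltPath M (insert ((k - 1) * d + f + 1) (tau0 d f n))
          (tau0 d f n)) ∧
      -- (iv) otherwise the matching is perfect
      ((n ≠ f ∧ (¬ ∃ k : ℕ, 1 ≤ k ∧ f ≤ d - 2 ∧ n = k * d + f) ∧
          (¬ ∃ k : ℕ, 1 ≤ k ∧ f ≤ d - 2 ∧ n + 1 = k * d)) →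
        ∀ σ : Finset ℕ, ¬ IsCritical (Knf n f) M σ) := by
  rcases hf.eq_or_lt with rfl | hf
  · have hR := isPivotRank_coneRank (n := n) (f := d - 1) (v := d) (by omega)
    refine ⟨_, hR.isMatching, hR.isAcyclic, isWeighted_pivotMatching (ConeRank.vA_insert hd),
      ?_, ?_, by omega, by omega, ?_⟩
    · rintro _ ⟨τ, _, -, hdτ, rfl⟩
      exact ⟨d, hdτ, rfl, .inr d.mod_self⟩
    · rintro rfl σ
      exact isCritical_Knf_self_iff hR fun _ h => h.2.not_gt (by omega)
    · rintro ⟨hne, -⟩ σ hσ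
      obtain ⟨hσ, hrank⟩ := hR.isCritical_iff.1 hσ
      exact hrank () ⟨hσ, by omega⟩
  · replace hf : f + 1 < d := by omega
    have hR := isPivotRank_wallRank (n := n) hf
    refine ⟨wallMatching d f n, hR.isMatching, hR.isAcyclic,
      isWeighted_pivotMatching (WallRank.vA_insert_pivot hf), ?_, ?_,
      fun k hk _ => isCriticalPair_of_eq_mul_add hf hk,
      fun k hk _ => isCriticalPair_of_add_one_eq_mul hf hk, ?_⟩
    · rintro _ ⟨τ, a, -, hpivot, rfl⟩
      exact ⟨_, hpivot, rfl, pivot_mod_eq hf a⟩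
    · rintro rfl σ
      exact isCritical_Knf_self_iff hR (not_wallRank_self hf)
    · rintro ⟨hnf, hnk, hnk'⟩ σ hσ
      rcases exists_eq_mul_of_isCritical hf (by omega) hσ with ⟨k, hk, hn⟩ | ⟨k, hk, hn⟩
      exacts [hnk ⟨k, hk, by omega, hn⟩, hnk' ⟨k, hk, by omega, hn⟩]
end
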